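/- Let T > 0, let g satisfy (g1), be regularly oscillating at zero, and satisfy lim_{s→0⁺} g(s)/s = 0 and lim_{s→+∞} g(s)/s = +∞. Let a ∈ L¹([0,T]) satisfy (a1) and (a2). Then the equation u'' + a(x) g(u) = 0 has at least one positive solution satisfying the Neumann boundary conditions and at least one positive solution satisfying the periodic boundary conditions. -/

import Mathlib

open MeasureTheory Set Filter

/-- `u` (with derivative `u'`) is a C¹ solution of `u'' + f(x) = 0` on `[0,T]`:
`u'` is absolutely continuous and the equation holds a.e., expressed via the
integral equation `u'(x) = u'(0) − ∫₀ˣ f(t) dt`. -/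
def IsSolOn (T : ℝ) (f : ℝ → ℝ) (u u' : ℝ → ℝ) : Prop :=
  (∀ x ∈ Icc (0:ℝ) T, HasDerivWithinAt u (u' x) (Icc (0:ℝ) T) x) ∧
  ContinuousOn u' (Icc (0:ℝ) T) ∧
  ∀ x ∈ Icc (0:ℝ) T, u' x = u' 0 - ∫ t in (0:ℝ)..x, f t

/-- The equation `u'' + a(x) g(u) = 0` on `[0,T]` has a positive solution
satisfying the Neumann boundary conditions. -/
def PosSolNeumann (T : ℝ) (a g : ℝ → ℝ) : Prop :=
  ∃ u u' : ℝ → ℝ, IsSolOn T (fun t => a t * g (u t)) u u' ∧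
    (∀ x ∈ Icc (0:ℝ) T, 0 < u x) ∧ u' 0 = 0 ∧ u' T = 0

/-- The equation `u'' + a(x) g(u) = 0` on `[0,T]` has a positive solution
satisfying the periodic boundary conditions. -/
def PosSolPeriodic (T : ℝ) (a g : ℝ → ℝ) : Prop :=
  ∃ u u' : ℝ → ℝ, IsSolOn T (fun t => a t * g (u t)) u u' ∧
    (∀ x ∈ Icc (0:ℝ) T, 0 < u x) ∧ u 0 = u T ∧ u' 0 = u' T

/-- Condition (g1): `g : [0,∞) → [0,∞)` is continuous, `g 0 = 0`, `g > 0` on `(0,∞)`. -/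
def CondG1 (g : ℝ → ℝ) : Prop :=
  ContinuousOn g (Ici (0:ℝ)) ∧ (∀ s : ℝ, 0 ≤ s → 0 ≤ g s) ∧ g 0 = 0 ∧
    ∀ s : ℝ, 0 < s → 0 < g s

/-- `g` is regularly oscillating at zero. -/
def RegOscAtZero (g : ℝ → ℝ) : Prop :=
  ∀ ε : ℝ, 0 < ε → ∃ δ > (0:ℝ), ∃ η > (0:ℝ), ∀ s ω : ℝ,
    0 < s → s < δ → |ω - 1| < η → |g (ω * s) / g s - 1| < ε

/-- `liminf_{s → +∞} g(s)/s`, computed in `EReal`. -/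
noncomputable def GrowthLiminf (g : ℝ → ℝ) : EReal :=
  liminf (fun s : ℝ => ((g s / s : ℝ) : EReal)) atTop

/-- `limsup_{s → +∞} g(s)/s`, computed in `EReal`. -/
noncomputable def GrowthLimsup (g : ℝ → ℝ) : EReal :=
  limsup (fun s : ℝ => ((g s / s : ℝ) : EReal)) atTop

/-- Condition (a1): there are `m ≥ 1` pairwise disjoint closed intervals in `[0,T]`
on which `a ≥ 0` a.e. and `a` is not a.e. zero, while `a ≤ 0` a.e. outside them. -/
def CondA1 (T : ℝ) (a : ℝ → ℝ) : Prop :=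
  ∃ (m : ℕ) (σ τ : Fin m → ℝ), 0 < m ∧
    (∀ i, 0 ≤ σ i ∧ σ i ≤ τ i ∧ τ i ≤ T) ∧
    (Pairwise fun i j => Disjoint (Icc (σ i) (τ i)) (Icc (σ j) (τ j))) ∧
    (∀ i, ∀ᵐ x ∂(volume.restrict (Icc (σ i) (τ i))), 0 ≤ a x) ∧
    (∀ i, ¬ (∀ᵐ x ∂(volume.restrict (Icc (σ i) (τ i))), a x = 0)) ∧
    (∀ᵐ x ∂(volume.restrict (Icc (0:ℝ) T \ ⋃ i, Icc (σ i) (τ i))), a x ≤ 0)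

/-!
Extend `g` by zero to the negative half-line and cap it by a linear function, and shoot. A solution
that touches zero with negative slope stays negative afterwards, so a solution returning to a
positive value, or with nonnegative final slope, is positive throughout. For initial values `r`
near `0` the term `a g(u)` is a small perturbation: up to scale `u` is an affine function, and if
it is nearly constant then regular oscillation makes `u'(T) - u'(0)` close to `-g(r) ∫ a`, which is
positive. For large initial values superlinearity and concavity on the intervals where `a ≥ 0`
bound every positive solution, and where `a ≤ 0` convexity extends the bound. The two regimes give
opposite signs to the Neumann shooting function, hence a zero. In the periodic case they prescribe
the behaviour of the defect `(u(0) - u(T), u'(0) - u'(T))` along the boundary of a rectangle of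
initial data, so that it winds around the origin and must vanish. By the a priori bound, the
solutions found never reach the level where `g` was modified.
-/

section Topology

lemma lt_of_isPreconnected_of_forall_ne {X : Type*} [TopologicalSpace X] {s : Set X} {θ : X → ℝ}
    {x y : X} {v : ℝ} (hs : IsPreconnected s) (hθ : ContinuousOn θ s) (hne : ∀ z ∈ s, θ z ≠ v)
    (hx : x ∈ s) (hy : y ∈ s) (hlt : θ x < v) : θ y < v := by
  by_contra! hge
  obtain ⟨z, hz, hzv⟩ := hs.intermediate_value hx hy hθ ⟨hlt.le, hge⟩
  exact hne z hz hzv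

lemma exists_continuous_polar_form {X : Type*} [TopologicalSpace X] [SimplyConnectedSpace X]
    [LocallyPathConnectedSpace X] {G : X → ℂ} (hG : Continuous G) (h0 : ∀ x, G x ≠ 0) (p : X) :
    ∃ ρ θ : X → ℝ, Continuous θ ∧ θ p = (G p).arg ∧ (∀ x, 0 < ρ x) ∧
      ∀ x, (G x).re = ρ x * Real.cos (θ x) ∧ (G x).im = ρ x * Real.sin (θ x) := by
  obtain ⟨L, ⟨hLp, hL⟩, -⟩ := Complex.isCoveringMapOn_exp.existsUnique_continuousMap_lifts
    (⟨G, hG⟩ : C(X, ℂ)) (a₀ := p) (Complex.exp_log (h0 p)) (fun x => h0 x)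
  have hGL (x : X) : G x = Complex.exp (L x) := (congrFun hL x).symm
  refine ⟨fun x => Real.exp (L x).re, fun x => (L x).im, Complex.continuous_im.comp L.continuous,
    (congrArg Complex.im hLp).trans (Complex.log_im _), fun x => Real.exp_pos _, fun x => ?_⟩
  rw [hGL, Complex.exp_re, Complex.exp_im]
  exact ⟨rfl, rfl⟩

/- If `G` had no zero, a continuous branch of its argument that is `0` to within `π / 2` at `p`
would stay above `-π / 2` along `S`, whereas along `A` and then `B` it drops below `-π / 2`. -/
theorem exists_eq_zero_of_three_paths {X : Type*} [TopologicalSpace X] [SimplyConnectedSpace X]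
    [LocallyPathConnectedSpace X] {G : X → ℂ} (hG : Continuous G) {S A B : Set X} {p m q : X}
    (hS : IsPreconnected S) (hA : IsPreconnected A) (hB : IsPreconnected B)
    (hpS : p ∈ S) (hqS : q ∈ S) (hpA : p ∈ A) (hmA : m ∈ A) (hmB : m ∈ B) (hqB : q ∈ B)
    (hGS : ∀ x ∈ S, 0 < (G x).re) (hGA : ∀ x ∈ A, (G x).re = 0 → (G x).im < 0)
    (hGm : (G m).re < 0) (hGB : ∀ x ∈ B, (G x).re = 0 → 0 < (G x).im) :
    ∃ x, G x = 0 := by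
  by_contra! h0
  obtain ⟨ρ, θ, hθ, hθ_arg, hρ, hpolar⟩ := exists_continuous_polar_form hG h0 p
  have hθp : |θ p| < Real.pi / 2 := by
    rw [hθ_arg, Complex.abs_arg_lt_pi_div_two_iff]
    exact Or.inl (hGS p hpS)
  have hneS : ∀ x ∈ S, -θ x ≠ Real.pi / 2 := fun x hx h => (hGS x hx).ne' (by
    rw [(hpolar x).1, ← Real.cos_neg, h, Real.cos_pi_div_two, mul_zero])
  have hneA : ∀ x ∈ A, θ x ≠ Real.pi / 2 := fun x hx h => by
    have := hGA x hx (by rw [(hpolar x).1, h, Real.cos_pi_div_two, mul_zero])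
    rw [(hpolar x).2, h, Real.sin_pi_div_two, mul_one] at this
    exact this.not_gt (hρ x)
  have hneB : ∀ x ∈ B, θ x ≠ -(Real.pi / 2) := fun x hx h => by
    have := hGB x hx (by rw [(hpolar x).1, h, Real.cos_neg, Real.cos_pi_div_two, mul_zero])
    rw [(hpolar x).2, h, Real.sin_neg, Real.sin_pi_div_two] at this
    linarith [hρ x]
  have hq : -θ q < Real.pi / 2 := lt_of_isPreconnected_of_forall_ne (θ := -θ) hS
    hθ.neg.continuousOn hneS hpS hqS (neg_lt.1 (abs_lt.1 hθp).1)
  have hm : θ m < Real.pi / 2 := lt_of_isPreconnected_of_forall_ne hA hθ.continuousOn hneA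
    hpA hmA (abs_lt.1 hθp).2
  have hm' : θ m < -(Real.pi / 2) := by
    by_contra! hge
    rw [(hpolar m).1] at hGm
    exact hGm.not_ge (mul_nonneg (hρ m).le (Real.cos_nonneg_of_mem_Icc ⟨hge, hm.le⟩))
  have hq' := lt_of_isPreconnected_of_forall_ne hB hθ.continuousOn hneB hmB hqB hm'
  linarith

lemma exists_continuous_retraction_rectangle {r C d₀ d₁ : ℝ} (hrC : r ≤ C) (hd : d₀ ≤ d₁) :
    ∃ P : ℝ × ℝ → ℝ × ℝ, Continuous P ∧ (∀ x, P x ∈ Icc r C ×ˢ Icc d₀ d₁) ∧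
      ∀ x ∈ Icc r C ×ˢ Icc d₀ d₁, P x = x := by
  refine ⟨fun x => (max r (min C x.1), max d₀ (min d₁ x.2)), by fun_prop, fun x =>
    ⟨⟨le_max_left _ _, max_le hrC (min_le_left _ _)⟩, le_max_left _ _, max_le hd (min_le_left _ _)⟩,
    fun x hx => ?_⟩
  simp only [min_eq_right hx.1.2, max_eq_right hx.1.1, min_eq_right hx.2.2, max_eq_right hx.2.1]

theorem exists_eq_zero_of_rectangle {G : ℝ × ℝ → ℂ} (hG : Continuous G) {r C d₀ e d₁ : ℝ}
    (hrC : r ≤ C) (hd₀ : d₀ ≤ e) (hd₁ : e ≤ d₁)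
    (hbot : ∀ c ∈ Icc r C, 0 < (G (c, d₀)).re) (hright : ∀ d ∈ Icc d₀ d₁, 0 < (G (C, d)).re)
    (htop : ∀ c ∈ Icc r C, 0 < (G (c, d₁)).re)
    (hlow : ∀ d ∈ Icc d₀ e, (G (r, d)).re = 0 → (G (r, d)).im < 0) (hmid : (G (r, e)).re < 0)
    (hupp : ∀ d ∈ Icc e d₁, (G (r, d)).re = 0 → 0 < (G (r, d)).im) :
    ∃ x ∈ Icc r C ×ˢ Icc d₀ d₁, G x = 0 := by
  have hd : d₀ ≤ d₁ := hd₀.trans hd₁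
  obtain ⟨P, hP, hP_mem, hP_id⟩ := exists_continuous_retraction_rectangle hrC hd
  have hGP {c d : ℝ} (hc : c ∈ Icc r C) (hd : d ∈ Icc d₀ d₁) : (G ∘ P) (c, d) = G (c, d) :=
    congrArg G (hP_id (c, d) ⟨hc, hd⟩)
  have hr : r ∈ Icc r C := left_mem_Icc.2 hrC
  have hC : C ∈ Icc r C := right_mem_Icc.2 hrC
  have hb : d₀ ∈ Icc d₀ d₁ := left_mem_Icc.2 hd
  have ht : d₁ ∈ Icc d₀ d₁ := right_mem_Icc.2 hd
  have hS : IsPreconnected ((Icc r C ×ˢ {d₀} ∪ {C} ×ˢ Icc d₀ d₁) ∪ Icc r C ×ˢ {d₁}) :=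
    .union (C, d₁) (Or.inr ⟨rfl, ht⟩) ⟨hC, rfl⟩
      (.union (C, d₀) ⟨hC, rfl⟩ ⟨rfl, hb⟩ (isPreconnected_Icc.prod isPreconnected_singleton)
        (isPreconnected_singleton.prod isPreconnected_Icc))
      (isPreconnected_Icc.prod isPreconnected_singleton)
  have hleft (s t : ℝ) : IsPreconnected ({r} ×ˢ Icc s t) :=
    isPreconnected_singleton.prod isPreconnected_Icc
  obtain ⟨x, hx⟩ := exists_eq_zero_of_three_paths (hG.comp hP) hS (hleft d₀ e) (hleft e d₁)
    (p := (r, d₀)) (m := (r, e)) (q := (r, d₁)) (Or.inl (Or.inl ⟨hr, rfl⟩)) (Or.inr ⟨hr, rfl⟩)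
    ⟨rfl, le_rfl, hd₀⟩ ⟨rfl, hd₀, le_rfl⟩ ⟨rfl, le_rfl, hd₁⟩ ⟨rfl, hd₁, le_rfl⟩
    (by
      rintro ⟨c, d⟩ ((⟨hc, rfl⟩ | ⟨rfl, hd'⟩) | ⟨hc, rfl⟩)
      exacts [hGP hc hb ▸ hbot c hc, hGP hC hd' ▸ hright d hd', hGP hc ht ▸ htop c hc])
    (by rintro ⟨c, d⟩ ⟨rfl, hd'⟩; exact hGP hr ⟨hd'.1, hd'.2.trans hd₁⟩ ▸ hlow d hd')
    (hGP hr ⟨hd₀, hd₁⟩ ▸ hmid)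
    (by rintro ⟨c, d⟩ ⟨rfl, hd'⟩; exact hGP hr ⟨hd₀.trans hd'.1, hd'.2⟩ ▸ hupp d hd')
  exact ⟨P x, hP_mem x, hx⟩

end Topology

section WeightedIntegral

variable {b : ℝ → ℝ}

lemma intervalIntegrable_mul_of_continuous (hb : ∀ x y, IntervalIntegrable b volume x y)
    {φ : ℝ → ℝ} (hφ : Continuous φ) (x y : ℝ) :
    IntervalIntegrable (fun t => b t * φ t) volume x y :=
  (hb x y).mul_continuousOn hφ.continuousOn

lemma abs_integral_mul_le (hb : ∀ x y, IntervalIntegrable b volume x y) {φ : ℝ → ℝ}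
    {α β x y B : ℝ} (hαx : α ≤ x) (hxy : x ≤ y) (hyβ : y ≤ β) (hB : 0 ≤ B)
    (hφ : ∀ t ∈ Icc x y, |φ t| ≤ B) :
    |∫ t in x..y, b t * φ t| ≤ (∫ t in α..β, |b t|) * B := by
  have hbound (t : ℝ) (ht : t ∈ Ioc x y) : ‖b t * φ t‖ ≤ |b t| * B := by
    rw [Real.norm_eq_abs, abs_mul]
    exact mul_le_mul_of_nonneg_left (hφ t (Ioc_subset_Icc_self ht)) (abs_nonneg _)
  calc |∫ t in x..y, b t * φ t| = ‖∫ t in x..y, b t * φ t‖ := rfl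
    _ ≤ ∫ t in x..y, |b t| * B :=
        intervalIntegral.norm_integral_le_of_norm_le hxy (ae_of_all _ hbound)
          ((hb x y).abs.mul_const B)
    _ = (∫ t in x..y, |b t|) * B := intervalIntegral.integral_mul_const _ _
    _ ≤ (∫ t in α..β, |b t|) * B := mul_le_mul_of_nonneg_right
        (intervalIntegral.integral_mono_interval hαx hxy hyβ (ae_of_all _ fun t => abs_nonneg _)
          (hb α β).abs) hB

end WeightedIntegral

/-- `u` is a `C¹` solution of `u'' + h = 0` on `[α, β]` with derivative `w`, in integral form.
Both functions are continuous on the whole line, so that integrands built from `u` need no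
localization. -/
structure IsC1Solution (α β : ℝ) (h u w : ℝ → ℝ) : Prop where
  continuous : Continuous u
  continuous_deriv : Continuous w
  sub_eq : ∀ x ∈ Icc α β, ∀ y ∈ Icc α β, u y - u x = ∫ t in x..y, w t
  deriv_sub_eq : ∀ x ∈ Icc α β, ∀ y ∈ Icc α β, w y - w x = -∫ t in x..y, h t

namespace IsC1Solution

variable {α β : ℝ} {h u w : ℝ → ℝ}

lemma of_eq_add_integral (hu : Continuous u) (hw : Continuous w)
    (hh : ∀ x y, IntervalIntegrable h volume x y) {c d : ℝ}
    (hu_eq : ∀ x ∈ Icc α β, u x = c + ∫ t in α..x, w t)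
    (hw_eq : ∀ x ∈ Icc α β, w x = d - ∫ t in α..x, h t) : IsC1Solution α β h u w where
  continuous := hu
  continuous_deriv := hw
  sub_eq x hx y hy := by
    rw [hu_eq x hx, hu_eq y hy, add_sub_add_left_eq_sub,
      intervalIntegral.integral_interval_sub_left (hw.intervalIntegrable _ _)
        (hw.intervalIntegrable _ _)]
  deriv_sub_eq x hx y hy := by
    rw [hw_eq x hx, hw_eq y hy, sub_sub_sub_cancel_left, ← neg_sub,
      intervalIntegral.integral_interval_sub_left (hh _ _) (hh _ _)]

lemma mono (H : IsC1Solution α β h u w) {γ δ : ℝ} (hsub : Icc γ δ ⊆ Icc α β) :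
    IsC1Solution γ δ h u w where
  continuous := H.continuous
  continuous_deriv := H.continuous_deriv
  sub_eq x hx y hy := H.sub_eq x (hsub hx) y (hsub hy)
  deriv_sub_eq x hx y hy := H.deriv_sub_eq x (hsub hx) y (hsub hy)

lemma reflect (H : IsC1Solution α β h u w) :
    IsC1Solution (-β) (-α) (fun x => h (-x)) (fun x => u (-x)) (fun x => -w (-x)) where
  continuous := H.continuous.comp continuous_neg
  continuous_deriv := (H.continuous_deriv.comp continuous_neg).neg
  sub_eq x hx y hy := by
    rw [intervalIntegral.integral_neg, intervalIntegral.integral_comp_neg w,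
      ← intervalIntegral.integral_symm,
      H.sub_eq _ (neg_mem_Icc_iff.2 hx) _ (neg_mem_Icc_iff.2 hy)]
  deriv_sub_eq x hx y hy := by
    rw [intervalIntegral.integral_comp_neg h, neg_sub_neg,
      H.deriv_sub_eq _ (neg_mem_Icc_iff.2 hy) _ (neg_mem_Icc_iff.2 hx)]

lemma sub_le (H : IsC1Solution α β h u w) {x y K : ℝ} (hx : α ≤ x) (hxy : x ≤ y) (hy : y ≤ β)
    (hK : ∀ t ∈ Icc x y, w t ≤ K) : u y - u x ≤ K * (y - x) := by
  rw [H.sub_eq x ⟨hx, hxy.trans hy⟩ y ⟨hx.trans hxy, hy⟩]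
  calc ∫ t in x..y, w t ≤ ∫ _ in x..y, K := intervalIntegral.integral_mono_on hxy
        (H.continuous_deriv.intervalIntegrable _ _) intervalIntegrable_const hK
    _ = K * (y - x) := by rw [intervalIntegral.integral_const, smul_eq_mul, mul_comm]

lemma le_sub (H : IsC1Solution α β h u w) {x y K : ℝ} (hx : α ≤ x) (hxy : x ≤ y) (hy : y ≤ β)
    (hK : ∀ t ∈ Icc x y, K ≤ w t) : K * (y - x) ≤ u y - u x := by
  rw [H.sub_eq x ⟨hx, hxy.trans hy⟩ y ⟨hx.trans hxy, hy⟩]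
  calc K * (y - x) = ∫ _ in x..y, K := by
        rw [intervalIntegral.integral_const, smul_eq_mul, mul_comm]
    _ ≤ ∫ t in x..y, w t := intervalIntegral.integral_mono_on hxy intervalIntegrable_const
        (H.continuous_deriv.intervalIntegrable _ _) hK

lemma deriv_le_of_nonneg (H : IsC1Solution α β h u w) {x y : ℝ} (hx : α ≤ x) (hxy : x ≤ y)
    (hy : y ≤ β) (hh : ∀ᵐ t ∂volume.restrict (Icc x y), 0 ≤ h t) : w y ≤ w x := by
  have := H.deriv_sub_eq x ⟨hx, hxy.trans hy⟩ y ⟨hx.trans hxy, hy⟩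
  linarith [intervalIntegral.integral_nonneg_of_ae_restrict hxy hh]

lemma antitoneOn_deriv (H : IsC1Solution α β h u w)
    (hh : ∀ᵐ t ∂volume.restrict (Icc α β), 0 ≤ h t) : AntitoneOn w (Icc α β) :=
  fun _ hx _ hy hxy => H.deriv_le_of_nonneg hx.1 hxy hy.2
    (ae_restrict_of_ae_restrict_of_subset (Icc_subset_Icc hx.1 hy.2) hh)

lemma hasDerivWithinAt (H : IsC1Solution α β h u w) {x : ℝ} (hx : x ∈ Icc α β) :
    HasDerivWithinAt u (w x) (Icc α β) x := by
  have hprim : HasDerivAt (fun y => u x + ∫ t in x..y, w t) (w x) x :=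
    (intervalIntegral.integral_hasDerivAt_right (H.continuous_deriv.intervalIntegrable _ _)
      H.continuous_deriv.aestronglyMeasurable.stronglyMeasurableAtFilter
      H.continuous_deriv.continuousAt).const_add _
  refine hprim.hasDerivWithinAt.congr (fun y hy => ?_) ?_
  · rw [← H.sub_eq x hx y hy, add_sub_cancel]
  · rw [intervalIntegral.integral_same, add_zero]

lemma hasDerivAt (H : IsC1Solution α β h u w) {x : ℝ} (hx : x ∈ Ioo α β) :
    HasDerivAt u (w x) x :=
  (H.hasDerivWithinAt (Ioo_subset_Icc_self hx)).hasDerivAt (Icc_mem_nhds hx.1 hx.2)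

lemma concaveOn (H : IsC1Solution α β h u w)
    (hh : ∀ᵐ t ∂volume.restrict (Icc α β), 0 ≤ h t) : ConcaveOn ℝ (Icc α β) u := by
  refine AntitoneOn.concaveOn_of_deriv (convex_Icc α β) H.continuous.continuousOn ?_ ?_
  all_goals rw [interior_Icc]
  · exact fun x hx => (H.hasDerivAt hx).differentiableAt.differentiableWithinAt
  · exact ((H.antitoneOn_deriv hh).mono Ioo_subset_Icc_self).congr
      fun x hx => (H.hasDerivAt hx).deriv.symm

lemma isSolOn {T : ℝ} (H : IsC1Solution 0 T h u w) (hT : 0 ≤ T) : IsSolOn T h u w :=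
  ⟨fun _ hx => H.hasDerivWithinAt hx, H.continuous_deriv.continuousOn, fun x hx => by
    linarith [H.deriv_sub_eq 0 (left_mem_Icc.2 hT) x hx]⟩

end IsC1Solution

section Gronwall

variable {α β : ℝ}

lemma lt_on_Icc_of_le_imp_lt {φ ψ : ℝ → ℝ} (hφ : Continuous φ) (hψ : Continuous ψ)
    (hα : φ α ≤ ψ α) (h : ∀ x ∈ Icc α β, (∀ y ∈ Icc α x, φ y ≤ ψ y) → φ x < ψ x) :
    ∀ x ∈ Icc α β, φ x < ψ x := by
  by_contra! hne
  have hle : IsClosed {x | φ x ≤ ψ x} := isClosed_le hφ hψ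
  obtain ⟨z, ⟨hz, hzge⟩, hleast⟩ :=
    (isCompact_Icc.inter_right (isClosed_le hψ hφ)).exists_isLeast hne
  have hlt : Ico α z ⊆ {x | φ x ≤ ψ x} := fun y hy =>
    le_of_not_gt (α := ℝ) fun hgt => (hleast ⟨⟨hy.1, hy.2.le.trans hz.2⟩, hgt.le⟩).not_gt hy.2
  refine hzge.not_gt (h z hz ?_)
  rcases hz.1.eq_or_lt with rfl | hαz
  · rintro y hy
    rwa [le_antisymm hy.2 hy.1]
  · rw [← closure_Ico hαz.ne]
    exact closure_minimal hlt hle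

lemma exists_integral_max_sub_lt {k : ℝ → ℝ} (hk : IntervalIntegrable k volume α β)
    {ε : ℝ} (hε : 0 < ε) : ∃ M : ℝ, 0 ≤ M ∧ ∫ t in α..β, max (k t - M) 0 < ε := by
  have hlim : Tendsto (fun n : ℕ => ∫ t in α..β, max (k t - n) 0) atTop
      (nhds (∫ _ in α..β, (0 : ℝ))) := by
    refine intervalIntegral.tendsto_integral_filter_of_dominated_convergence (fun t => |k t|)
      (Eventually.of_forall fun n => ?_) (Eventually.of_forall fun n => ae_of_all _ fun t _ => ?_)
      hk.abs (ae_of_all _ fun t _ => ?_)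
    · exact (hk.aestronglyMeasurable_restrict_uIoc.sub aestronglyMeasurable_const).sup
        aestronglyMeasurable_const
    · rw [Real.norm_of_nonneg (le_max_right _ _)]
      exact max_le (by linarith [le_abs_self (k t), n.cast_nonneg (α := ℝ)]) (abs_nonneg _)
    · refine tendsto_const_nhds.congr' ?_
      filter_upwards [eventually_ge_atTop ⌈k t⌉₊] with n hn
      exact (max_eq_right (sub_nonpos.2 (Nat.ceil_le.1 hn))).symm
  rw [intervalIntegral.integral_zero] at hlim
  obtain ⟨n, hn⟩ := (hlim.eventually_lt_const hε).exists
  exact ⟨n, n.cast_nonneg, hn⟩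

lemma integral_exp_mul_sub (M : ℝ) {l : ℝ} (hl : l ≠ 0) (x : ℝ) :
    ∫ t in α..x, M * Real.exp (l * (t - α)) = M / l * (Real.exp (l * (x - α)) - 1) := by
  have hderiv (t : ℝ) : HasDerivAt (fun t => M / l * Real.exp (l * (t - α)))
      (M * Real.exp (l * (t - α))) t :=
    ((((hasDerivAt_id' t).sub_const α).const_mul l).exp.const_mul (M / l)).congr_deriv (by
      field_simp)
  rw [intervalIntegral.integral_eq_sub_of_hasDerivAt (fun t _ => hderiv t)
    ((by fun_prop : Continuous _).intervalIntegrable _ _), sub_self, mul_zero, Real.exp_zero]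
  ring

lemma integral_mul_exp_le {k : ℝ → ℝ} (hk : ∀ x y, IntervalIntegrable k volume x y) {M : ℝ}
    (hM0 : 0 ≤ M) (hM : ∫ t in α..β, max (k t - M) 0 < 1 / 4) {x : ℝ} (hx : x ∈ Icc α β) :
    ∫ t in α..x, k t * Real.exp ((4 * M + 1) * (t - α)) ≤
      1 / 2 * Real.exp ((4 * M + 1) * (x - α)) := by
  set l := 4 * M + 1
  have hl : 0 < l := by positivity
  have hMl : M / l ≤ 1 / 4 := by rw [div_le_iff₀ hl]; linarith
  set E : ℝ → ℝ := fun t => Real.exp (l * (t - α))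
  have hE : Continuous E := by fun_prop
  have hE1 : 1 ≤ E x := Real.one_le_exp (mul_nonneg hl.le (sub_nonneg.2 hx.1))
  have hmax (y z : ℝ) : IntervalIntegrable (fun t => max (k t - M) 0) volume y z :=
    let hsub := (hk y z).sub (intervalIntegrable_const (c := M))
    ⟨hsub.1.pos_part, hsub.2.pos_part⟩
  have hexcess : ∫ t in α..x, max (k t - M) 0 ≤ 1 / 4 :=
    (intervalIntegral.integral_mono_interval le_rfl hx.1 hx.2
      (ae_of_all _ fun t => le_max_right _ _) (hmax α β)).trans hM.le
  calc ∫ t in α..x, k t * E t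
      ≤ ∫ t in α..x, (M * E t + max (k t - M) 0 * E x) := by
        refine intervalIntegral.integral_mono_on hx.1
          (intervalIntegrable_mul_of_continuous hk hE _ _)
          (((hE.const_mul M).intervalIntegrable _ _).add ((hmax _ _).mul_const _)) fun t ht => ?_
        have hEt : E t ≤ E x := Real.exp_le_exp.2 (by gcongr; exact ht.2)
        have hkt : k t ≤ M + max (k t - M) 0 := by linarith [le_max_left (k t - M) 0]
        calc k t * E t ≤ (M + max (k t - M) 0) * E t := by gcongr
          _ ≤ M * E t + max (k t - M) 0 * E x := by
            rw [add_mul]; gcongr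
    _ = M / l * (E x - 1) + (∫ t in α..x, max (k t - M) 0) * E x := by
        rw [intervalIntegral.integral_add ((hE.const_mul M).intervalIntegrable _ _)
          ((hmax _ _).mul_const _), integral_exp_mul_sub M hl.ne',
          intervalIntegral.integral_mul_const]
    _ ≤ 1 / 4 * E x + 1 / 4 * E x := by
        gcongr
        linarith
    _ = 1 / 2 * E x := by ring

theorem exists_delay_gronwall_const (hαβ : α ≤ β) {k : ℝ → ℝ}
    (hk : ∀ x y, IntervalIntegrable k volume x y) (hk0 : ∀ t, 0 ≤ k t) :
    ∃ C : ℝ, 0 ≤ C ∧ ∀ A : ℝ, 0 ≤ A → ∀ v θ : ℝ → ℝ, Continuous v → Continuous θ →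
      (∀ t ∈ Icc α β, θ t ∈ Icc α t) →
      (∀ x ∈ Icc α β, v x ≤ A + ∫ t in α..x, k t * v (θ t)) → ∀ x ∈ Icc α β, v x ≤ C * A := by
  obtain ⟨M, hM0, hM⟩ := exists_integral_max_sub_lt (hk α β) (ε := 1 / 4) (by norm_num)
  set l := 4 * M + 1
  have hl : 0 < l := by positivity
  set E : ℝ → ℝ := fun t => Real.exp (l * (t - α)) with hE_def
  have hE : Continuous E := by fun_prop
  have hE_mono : Monotone E := fun s t hst => Real.exp_le_exp.2 (by gcongr)
  have hEα : E α = 1 := by simp [hE_def]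
  refine ⟨2 * E β, by positivity, fun A hA v θ hv hθ hθ_mem h x hx => ?_⟩
  have hlt (A' : ℝ) (hA' : 2 * A < A') : v x < A' * E x := by
    have hA'0 : 0 < A' := by linarith
    refine lt_on_Icc_of_le_imp_lt (β := β) hv (hE.const_mul A') ?_ (fun z hz hle => ?_) x hx
    · have := h α ⟨le_rfl, hαβ⟩
      rw [intervalIntegral.integral_same] at this
      rw [hEα]
      linarith
    · have hint : ∫ t in α..z, k t * v (θ t) ≤ A' * (1 / 2 * E z) := by
        calc ∫ t in α..z, k t * v (θ t) ≤ ∫ t in α..z, A' * (k t * E t) := by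
              refine intervalIntegral.integral_mono_on hz.1
                (intervalIntegrable_mul_of_continuous hk (hv.comp hθ) _ _)
                ((intervalIntegrable_mul_of_continuous hk hE _ _).const_mul _) fun t ht => ?_
              have hθt := hθ_mem t ⟨ht.1, ht.2.trans hz.2⟩
              have hvt : v (θ t) ≤ A' * E t := (hle _ ⟨hθt.1, hθt.2.trans ht.2⟩).trans
                (mul_le_mul_of_nonneg_left (hE_mono hθt.2) hA'0.le)
              linarith [mul_le_mul_of_nonneg_left hvt (hk0 t)]
          _ ≤ A' * (1 / 2 * E z) := by
              rw [intervalIntegral.integral_const_mul]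
              exact mul_le_mul_of_nonneg_left (integral_mul_exp_le hk hM0 hM hz) hA'0.le
      have hEz : 1 ≤ E z := hEα ▸ hE_mono hz.1
      linarith [h z hz, mul_le_mul_of_nonneg_left hEz hA'0.le]
  have hvx : v x ≤ 2 * A * E x := by
    have hEx : 0 < E x := Real.exp_pos _
    rw [← div_le_iff₀ hEx]
    exact le_of_forall_gt_imp_ge_of_dense fun A' hA' => ((div_lt_iff₀ hEx).2 (hlt A' hA')).le
  calc v x ≤ 2 * A * E x := hvx
    _ ≤ 2 * A * E β := mul_le_mul_of_nonneg_left (hE_mono hx.2) (by positivity)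
    _ = 2 * E β * A := by ring

end Gronwall

namespace IsC1Solution

variable {α β : ℝ} {h u w : ℝ → ℝ}

lemma abs_deriv_le (H : IsC1Solution α β h u w) (hh : IntervalIntegrable h volume α β)
    {s x : ℝ} (hs : s ∈ Icc α x) (hx : x ≤ β) : |w s| ≤ |w α| + ∫ t in α..x, |h t| := by
  have hw := H.deriv_sub_eq α ⟨le_rfl, hs.1.trans (hs.2.trans hx)⟩ s ⟨hs.1, hs.2.trans hx⟩
  have hh' : IntervalIntegrable (fun t => |h t|) volume α x :=
    hh.abs.mono_set (uIcc_subset_uIcc_left (Icc_subset_uIcc ⟨hs.1.trans hs.2, hx⟩))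
  calc |w s| = |w α - ∫ t in α..s, h t| := by rw [← sub_add_cancel (w s) (w α), hw]; ring_nf
    _ ≤ |w α| + |∫ t in α..s, h t| := abs_sub _ _
    _ ≤ |w α| + ∫ t in α..x, |h t| := by
        gcongr
        exact (intervalIntegral.abs_integral_le_integral_abs hs.1).trans
          (intervalIntegral.integral_mono_interval le_rfl hs.1 hs.2
            (ae_of_all _ fun t => abs_nonneg _) hh')

lemma abs_sub_le (H : IsC1Solution α β h u w) {Λ : ℝ} (hΛ : ∀ t ∈ Icc α β, |w t| ≤ Λ)
    {x y : ℝ} (hx : x ∈ Icc α β) (hy : y ∈ Icc α β) : |u y - u x| ≤ Λ * |y - x| := by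
  rw [H.sub_eq x hx y hy, ← Real.norm_eq_abs]
  exact intervalIntegral.norm_integral_le_of_norm_le_const fun t ht =>
    hΛ t (uIcc_subset_Icc hx hy (uIoc_subset_uIcc ht))

lemma abs_apply_le (H : IsC1Solution α β h u w) (hh : IntervalIntegrable h volume α β) {x : ℝ}
    (hx : x ∈ Icc α β) : |u x| ≤ |u α| + (β - α) * (|w α| + ∫ t in α..x, |h t|) := by
  have hsub := (H.mono (Icc_subset_Icc_right hx.2)).abs_sub_le
    (fun s hs => H.abs_deriv_le hh hs hx.2) (left_mem_Icc.2 hx.1) (right_mem_Icc.2 hx.1)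
  have hQ : 0 ≤ |w α| + ∫ t in α..x, |h t| :=
    add_nonneg (abs_nonneg _) (intervalIntegral.integral_nonneg hx.1 fun t _ => abs_nonneg _)
  rw [abs_of_nonneg (sub_nonneg.2 hx.1)] at hsub
  have hlen := mul_le_mul_of_nonneg_left (sub_le_sub_right hx.2 α) hQ
  linarith [abs_sub_abs_le_abs_sub (u x) (u α)]

theorem exists_abs_le (hαβ : α ≤ β) {b : ℝ → ℝ} (hb : ∀ x y, IntervalIntegrable b volume x y)
    (K : ℝ) : ∃ C : ℝ, 0 ≤ C ∧ ∀ f θ u w : ℝ → ℝ, Continuous f → (∀ s, |f s| ≤ K * |s|) →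
      Continuous θ → (∀ t ∈ Icc α β, θ t ∈ Icc α t) →
      IsC1Solution α β (fun t => b t * f (u (θ t))) u w →
      ∀ x ∈ Icc α β, |u x| ≤ C * (|u α| + (β - α) * |w α|) := by
  have hlen : 0 ≤ β - α := sub_nonneg.2 hαβ
  have hk (x y : ℝ) : IntervalIntegrable (fun t => (β - α) * (|K| * |b t|)) volume x y :=
    ((hb x y).abs.const_mul _).const_mul _
  obtain ⟨C, hC, hgron⟩ := exists_delay_gronwall_const hαβ hk fun t => by positivity
  refine ⟨C, hC, fun f θ u w hf hfK hθ hθ_mem H => hgron _ (by positivity) (fun x => |u x|) θ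
    H.continuous.abs hθ hθ_mem fun x hx => ?_⟩
  have hu : Continuous fun t => u (θ t) := H.continuous.comp hθ
  have hint := intervalIntegrable_mul_of_continuous hb (hf.comp hu)
  have hmono : ∫ t in α..x, |b t * f (u (θ t))| ≤ ∫ t in α..x, |K| * |b t| * |u (θ t)| := by
    refine intervalIntegral.integral_mono_on hx.1 (hint α x).abs
      (intervalIntegrable_mul_of_continuous (fun x y => (hb x y).abs.const_mul |K|) hu.abs α x)
      fun t _ => ?_
    calc |b t * f (u (θ t))| ≤ |b t| * (K * |u (θ t)|) := by
          rw [abs_mul]; gcongr; exact hfK _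
      _ ≤ |b t| * (|K| * |u (θ t)|) := by gcongr; exact le_abs_self K
      _ = |K| * |b t| * |u (θ t)| := by ring
  calc |u x| ≤ |u α| + (β - α) * (|w α| + ∫ t in α..x, |b t * f (u (θ t))|) :=
        H.abs_apply_le (hint α β) hx
    _ ≤ |u α| + (β - α) * (|w α| + ∫ t in α..x, |K| * |b t| * |u (θ t)|) := by gcongr
    _ = |u α| + (β - α) * |w α| + ∫ t in α..x, (β - α) * (|K| * |b t|) * |u (θ t)| := by
        rw [mul_add, ← add_assoc, ← intervalIntegral.integral_const_mul]
        simp only [mul_assoc]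

theorem eq_zero_of_initial_eq_zero {b f : ℝ → ℝ} (hb : ∀ x y, IntervalIntegrable b volume x y)
    (hf : Continuous f) {K : ℝ} (hfK : ∀ s, |f s| ≤ K * |s|)
    (H : IsC1Solution α β (fun t => b t * f (u t)) u w) (hu : u α = 0) (hw : w α = 0) {x : ℝ}
    (hx : x ∈ Icc α β) : u x = 0 := by
  obtain ⟨C, -, hC⟩ := exists_abs_le (hx.1.trans hx.2) hb K
  have := hC f id u w hf hfK continuous_id (fun t ht => ⟨ht.1, le_rfl⟩) H x hx
  rwa [hu, hw, abs_zero, mul_zero, add_zero, mul_zero, abs_nonpos_iff] at this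

end IsC1Solution

section Tonelli

variable {b f : ℝ → ℝ} {α ε : ℝ}

lemma continuous_integral_mul {X : Type*} [TopologicalSpace X] [FirstCountableTopology X]
    [WeaklyLocallyCompactSpace X] (hb : ∀ x y, IntervalIntegrable b volume x y)
    {F : X → ℝ → ℝ} (hF : Continuous fun q : X × ℝ => F q.1 q.2) :
    Continuous fun q : X × ℝ => ∫ t in α..q.2, b t * F q.1 t := by
  rw [continuous_iff_continuousAt]
  rintro ⟨p, x⟩
  have hFp (p : X) : Continuous (F p) := hF.comp (Continuous.prodMk_right p)
  obtain ⟨S, hS, hpS⟩ := exists_compact_mem_nhds p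
  obtain ⟨A, hA⟩ := exists_lt (min α x)
  obtain ⟨B, hB⟩ := exists_gt (max α x)
  obtain ⟨hAα, hAx⟩ := lt_min_iff.1 hA
  obtain ⟨hαB, hxB⟩ := max_lt_iff.1 hB
  obtain ⟨M, hM⟩ := (hS.prod (isCompact_Icc (a := A) (b := B))).exists_bound_of_continuousOn
    hF.continuousOn
  refine intervalIntegral.continuousAt_parametric_primitive_of_dominated
    (F := fun p t => b t * F p t) (fun t => |b t| * M) A B (fun q => ?_) ?_
    ((hb A B).abs.mul_const M) (ae_of_all _ fun t => ?_) ⟨hAα, hαB⟩ ⟨hAx, hxB⟩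
    Real.volume_singleton
  · exact (intervalIntegrable_mul_of_continuous hb (hFp q) A B).aestronglyMeasurable_restrict_uIoc
  · filter_upwards [hpS] with q hq
    refine (ae_restrict_iff' measurableSet_uIoc).2 (ae_of_all _ fun t ht => ?_)
    rw [uIoc_of_le (hAx.trans hxB).le] at ht
    rw [norm_mul]
    exact mul_le_mul_of_nonneg_left (hM (q, t) ⟨hq, Ioc_subset_Icc_self ht⟩) (abs_nonneg _)
  · exact (continuous_const.mul (hF.comp (Continuous.prodMk_left t))).continuousAt

/-- The derivative prescribed by the equation `u'' + b f(u(max (t - ε) α)) = 0` with the initial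
data `p` at `α`, when `U p` is substituted for `u` on the right. -/
noncomputable def tonelliDeriv (b f : ℝ → ℝ) (α ε : ℝ) (U : ℝ × ℝ → ℝ → ℝ) (p : ℝ × ℝ) (x : ℝ) :
    ℝ :=
  p.2 - ∫ t in α..x, b t * f (U p (max (t - ε) α))

/-- The iterates of Tonelli's scheme: because of the delay, the `k`-th one already solves the
delayed equation on `[α, α + k ε]`. -/
noncomputable def tonelliIterate (b f : ℝ → ℝ) (α ε : ℝ) : ℕ → ℝ × ℝ → ℝ → ℝ
  | 0 => fun p _ => p.1
  | k + 1 => fun p x => p.1 + ∫ s in α..x, tonelliDeriv b f α ε (tonelliIterate b f α ε k) p s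

lemma continuous_tonelliDeriv (hb : ∀ x y, IntervalIntegrable b volume x y) (hf : Continuous f)
    {U : ℝ × ℝ → ℝ → ℝ} (hU : Continuous fun q : (ℝ × ℝ) × ℝ => U q.1 q.2) :
    Continuous fun q : (ℝ × ℝ) × ℝ => tonelliDeriv b f α ε U q.1 q.2 :=
  (continuous_snd.comp continuous_fst).sub (continuous_integral_mul hb
    (F := fun p t => f (U p (max (t - ε) α)))
    (hf.comp (hU.comp (f := fun q : (ℝ × ℝ) × ℝ => (q.1, max (q.2 - ε) α)) (by fun_prop))))

lemma continuous_tonelliIterate (hb : ∀ x y, IntervalIntegrable b volume x y)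
    (hf : Continuous f) (k : ℕ) :
    Continuous fun q : (ℝ × ℝ) × ℝ => tonelliIterate b f α ε k q.1 q.2 := by
  induction k with
  | zero => exact continuous_fst.comp continuous_fst
  | succ k ih =>
    have hderiv := (continuous_tonelliDeriv (α := α) (ε := ε) hb hf ih).comp
      (f := fun z : ((ℝ × ℝ) × ℝ) × ℝ => (z.1.1, z.2)) (by fun_prop)
    exact (continuous_fst.comp continuous_fst).add
      (intervalIntegral.continuous_parametric_intervalIntegral_of_continuous
        (f := fun (q : (ℝ × ℝ) × ℝ) s => tonelliDeriv b f α ε (tonelliIterate b f α ε k) q.1 s)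
        hderiv continuous_snd)

lemma tonelliIterate_succ_eq (hε : 0 ≤ ε) (k : ℕ) (p : ℝ × ℝ) {x : ℝ}
    (hx : x ∈ Icc α (α + k * ε)) :
    tonelliIterate b f α ε (k + 1) p x = tonelliIterate b f α ε k p x := by
  induction k generalizing x with
  | zero =>
    obtain rfl : x = α := by simpa using hx
    simp only [tonelliIterate, intervalIntegral.integral_same, add_zero]
  | succ k ih =>
    rw [tonelliIterate, tonelliIterate, add_right_inj]
    refine intervalIntegral.integral_congr fun s hs => ?_
    rw [uIcc_of_le hx.1] at hs
    rw [tonelliDeriv, tonelliDeriv, sub_right_inj]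
    refine intervalIntegral.integral_congr fun t ht => ?_
    rw [uIcc_of_le hs.1] at ht
    have hmem : max (t - ε) α ∈ Icc α (α + k * ε) := by
      refine ⟨le_max_right _ _, max_le ?_ (le_add_of_nonneg_right (by positivity))⟩
      have := hx.2
      push_cast at this
      linarith [ht.2, hs.2]
    exact congrArg (fun y => b t * f y) (ih hmem)

theorem exists_delayed_solutions (hb : ∀ x y, IntervalIntegrable b volume x y)
    (hf : Continuous f) {β : ℝ} (hαβ : α ≤ β) (hε : 0 < ε) : ∃ U W : ℝ × ℝ → ℝ → ℝ,
      (∀ x, Continuous fun p => U p x) ∧ (∀ x, Continuous fun p => W p x) ∧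
      ∀ p, (U p α, W p α) = p ∧
        IsC1Solution α β (fun t => b t * f (U p (max (t - ε) α))) (U p) (W p) := by
  obtain ⟨N, hN⟩ := exists_nat_gt ((β - α) / ε)
  rw [div_lt_iff₀ hε] at hN
  have hU := continuous_tonelliIterate (α := α) (ε := ε) hb hf N
  have hW := continuous_tonelliDeriv (α := α) (ε := ε) hb hf hU
  have hUp (p : ℝ × ℝ) := hU.comp (Continuous.prodMk_right p)
  have hWp (p : ℝ × ℝ) := hW.comp (Continuous.prodMk_right p)
  have hU_eq (p : ℝ × ℝ) (x : ℝ) (hx : x ∈ Icc α β) : tonelliIterate b f α ε N p x =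
      p.1 + ∫ s in α..x, tonelliDeriv b f α ε (tonelliIterate b f α ε N) p s := by
    rw [← tonelliIterate_succ_eq hε.le N p ⟨hx.1, by linarith [hx.2]⟩]
    rfl
  refine ⟨tonelliIterate b f α ε N, tonelliDeriv b f α ε (tonelliIterate b f α ε N),
    fun x => hU.comp (Continuous.prodMk_left x), fun x => hW.comp (Continuous.prodMk_left x),
    fun p => ⟨Prod.ext ?_ ?_, ?_⟩⟩
  · simpa only [intervalIntegral.integral_same, add_zero] using hU_eq p α (left_mem_Icc.2 hαβ)
  · simp only [tonelliDeriv, intervalIntegral.integral_same, sub_zero]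
  · exact .of_eq_add_integral (hUp p) (hWp p)
      (intervalIntegrable_mul_of_continuous hb (hf.comp ((hUp p).comp (by fun_prop))))
      (hU_eq p) fun x _ => rfl

end Tonelli

section Compactness

variable {α β : ℝ} {b f : ℝ → ℝ} {K : ℝ}

theorem exists_subseq_tendsto_of_lipschitzOnWith (hαβ : α ≤ β) {v : ℕ → ℝ → ℝ} {B : ℝ}
    {Λ : NNReal} (hB : ∀ n, ∀ x ∈ Icc α β, |v n x| ≤ B)
    (hΛ : ∀ n, LipschitzOnWith Λ (v n) (Icc α β)) :
    ∃ v₀ : ℝ → ℝ, ∃ φ : ℕ → ℕ, Continuous v₀ ∧ StrictMono φ ∧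
      ∀ x ∈ Icc α β, Tendsto (fun n => v (φ n) x) atTop (nhds (v₀ x)) := by
  have hlip (n : ℕ) : LipschitzWith Λ ((Icc α β).domRestrict (v n)) :=
    lipschitzOnWith_iff_restrict.1 (hΛ n)
  let F : ℕ → BoundedContinuousFunction (Icc α β) ℝ := fun n =>
    .mkOfCompact ⟨(Icc α β).domRestrict (v n), (hlip n).continuous⟩
  have hcompact : IsCompact (closure (range F)) := by
    refine BoundedContinuousFunction.arzela_ascoli (Icc (-B) B) isCompact_Icc (range F) ?_ ?_
    · rintro _ x ⟨n, rfl⟩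
      exact abs_le.1 (hB n x x.2)
    · refine (LipschitzWith.uniformEquicontinuous _ Λ ?_).equicontinuous
      rintro ⟨_, n, rfl⟩
      exact hlip n
  obtain ⟨v₀, -, φ, hφ, hlim⟩ := hcompact.tendsto_subseq fun n => subset_closure (mem_range_self n)
  refine ⟨IccExtend hαβ v₀, φ, v₀.continuous.Icc_extend', hφ, fun x hx => ?_⟩
  rw [IccExtend_of_mem hαβ _ hx]
  exact ((continuous_eval_const (⟨x, hx⟩ : Icc α β)).tendsto v₀).comp hlim

lemma tendsto_comp_of_lipschitzOnWith {v : ℕ → ℝ → ℝ} {θ : ℕ → ℝ} {s : Set ℝ} {Λ : NNReal}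
    {x y : ℝ} (hΛ : ∀ n, LipschitzOnWith Λ (v n) s) (hx : x ∈ s) (hθ_mem : ∀ n, θ n ∈ s)
    (hθ : Tendsto θ atTop (nhds x)) (hv : Tendsto (fun n => v n x) atTop (nhds y)) :
    Tendsto (fun n => v n (θ n)) atTop (nhds y) := by
  refine tendsto_of_tendsto_of_dist hv (squeeze_zero (fun n => dist_nonneg)
    (fun n => (hΛ n).dist_le_mul x hx (θ n) (hθ_mem n)) ?_)
  simpa only [dist_self, mul_zero] using
    ((tendsto_const_nhds (x := x)).dist hθ).const_mul (Λ : ℝ)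

lemma IsC1Solution.exists_of_tendsto {h u w : ℕ → ℝ → ℝ} {h₀ u₀ g : ℝ → ℝ} {d Λ : ℝ}
    (hαβ : α ≤ β) (H : ∀ n, IsC1Solution α β (h n) (u n) (w n))
    (hh_int : ∀ n, IntervalIntegrable (h n) volume α β) (hg : IntervalIntegrable g volume α β)
    (hhg : ∀ n, ∀ t ∈ Icc α β, |h n t| ≤ g t) (hΛ : ∀ n, ∀ t ∈ Icc α β, |w n t| ≤ Λ)
    (hh₀ : ∀ x y, IntervalIntegrable h₀ volume x y) (hu₀ : Continuous u₀)
    (hh : ∀ t ∈ Icc α β, Tendsto (fun n => h n t) atTop (nhds (h₀ t)))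
    (hu : ∀ x ∈ Icc α β, Tendsto (fun n => u n x) atTop (nhds (u₀ x)))
    (hw : Tendsto (fun n => w n α) atTop (nhds d)) :
    ∃ w₀, IsC1Solution α β h₀ u₀ w₀ ∧
      ∀ x ∈ Icc α β, Tendsto (fun n => w n x) atTop (nhds (w₀ x)) := by
  set w₀ : ℝ → ℝ := fun x => d - ∫ t in α..x, h₀ t
  have hw₀ : Continuous w₀ :=
    continuous_const.sub (intervalIntegral.continuous_primitive hh₀ α)
  have hα : α ∈ Icc α β := left_mem_Icc.2 hαβ
  have hsub {x : ℝ} (hx : x ∈ Icc α β) : uIoc α x ⊆ Icc α β :=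
    uIoc_subset_uIcc.trans (uIcc_subset_Icc hα hx)
  have hsub' {x : ℝ} (hx : x ∈ Icc α β) : uIcc α x ⊆ uIcc α β :=
    uIcc_subset_uIcc_left (Icc_subset_uIcc hx)
  have hlim_w : ∀ x ∈ Icc α β, Tendsto (fun n => w n x) atTop (nhds (w₀ x)) := fun x hx => by
    have hw_eq (n : ℕ) : w n x = w n α - ∫ t in α..x, h n t := by
      linarith [(H n).deriv_sub_eq α hα x hx]
    simp only [hw_eq]
    refine hw.sub (intervalIntegral.tendsto_integral_filter_of_dominated_convergence g
      (Eventually.of_forall fun n =>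
        ((hh_int n).mono_set (hsub' hx)).aestronglyMeasurable_restrict_uIoc)
      (Eventually.of_forall fun n => ae_of_all _ fun t ht => hhg n t (hsub hx ht))
      (hg.mono_set (hsub' hx)) (ae_of_all _ fun t ht => hh t (hsub hx ht)))
  refine ⟨w₀, .of_eq_add_integral hu₀ hw₀ hh₀ (c := u₀ α) (fun x hx => ?_) fun x _ => rfl, hlim_w⟩
  have hu_eq (n : ℕ) : u n x = u n α + ∫ t in α..x, w n t := by
    linarith [(H n).sub_eq α hα x hx]
  refine tendsto_nhds_unique (hu x hx) ?_
  simp only [hu_eq]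
  exact (hu α hα).add (intervalIntegral.tendsto_integral_filter_of_dominated_convergence
    (fun _ => Λ) (Eventually.of_forall fun n => (H n).continuous_deriv.aestronglyMeasurable)
    (Eventually.of_forall fun n => ae_of_all _ fun t ht => hΛ n t (hsub hx ht))
    intervalIntegrable_const (ae_of_all _ fun t ht => hlim_w t (hsub hx ht)))

lemma IsC1Solution.exists_uniform_bounds (hαβ : α ≤ β)
    (hb : ∀ x y, IntervalIntegrable b volume x y) (hf : Continuous f)
    (hfK : ∀ s, |f s| ≤ K * |s|) {S : Set (ℝ × ℝ)} (hS : IsCompact S) :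
    ∃ (B : ℝ) (Λ : NNReal), ∀ θ u w : ℝ → ℝ, Continuous θ → (∀ t ∈ Icc α β, θ t ∈ Icc α t) →
      IsC1Solution α β (fun t => b t * f (u (θ t))) u w → (u α, w α) ∈ S →
      (∀ x ∈ Icc α β, |u x| ≤ B) ∧ (∀ x ∈ Icc α β, |w x| ≤ Λ) ∧
        LipschitzOnWith Λ u (Icc α β) := by
  obtain ⟨M, hM⟩ := hS.isBounded.exists_norm_le
  obtain ⟨C, hC0, hC⟩ := exists_abs_le hαβ hb K
  have hlen : 0 ≤ β - α := sub_nonneg.2 hαβ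
  set B := C * (M + (β - α) * M)
  set Λ := M + (∫ t in α..β, |b t|) * (|K| * B)
  refine ⟨B, Λ.toNNReal, fun θ u w hθ hθ_mem H hS_mem => ?_⟩
  have huM : |u α| ≤ M := (le_max_left _ _).trans (hM _ hS_mem)
  have hwM : |w α| ≤ M := (le_max_right _ _).trans (hM _ hS_mem)
  have hu : ∀ x ∈ Icc α β, |u x| ≤ B := fun x hx =>
    (hC f θ u w hf hfK hθ hθ_mem H x hx).trans (mul_le_mul_of_nonneg_left
      (add_le_add huM (mul_le_mul_of_nonneg_left hwM hlen)) hC0)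
  have hfu : ∀ t ∈ Icc α β, |f (u (θ t))| ≤ |K| * B := fun t ht => by
    have hθt : θ t ∈ Icc α β := Icc_subset_Icc_right ht.2 (hθ_mem t ht)
    exact (hfK _).trans (mul_le_mul (le_abs_self K) (hu _ hθt) (abs_nonneg _) (abs_nonneg _))
  have hB : 0 ≤ B := (abs_nonneg _).trans (hu α (left_mem_Icc.2 hαβ))
  have hw : ∀ x ∈ Icc α β, |w x| ≤ Λ := fun x hx => by
    have hwx := H.deriv_sub_eq α (left_mem_Icc.2 hαβ) x hx
    have hint := abs_integral_mul_le hb le_rfl hx.1 hx.2 (by positivity)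
      fun t ht => hfu t ⟨ht.1, ht.2.trans hx.2⟩
    calc |w x| = |w α - ∫ t in α..x, b t * f (u (θ t))| := by
          rw [← sub_add_cancel (w x) (w α), hwx]; ring_nf
      _ ≤ Λ := (abs_sub _ _).trans (add_le_add hwM hint)
  have hΛ : Λ ≤ Λ.toNNReal := Real.le_coe_toNNReal Λ
  refine ⟨hu, fun x hx => (hw x hx).trans hΛ, LipschitzOnWith.of_dist_le_mul fun x hx y hy => ?_⟩
  exact H.abs_sub_le (fun t ht => (hw t ht).trans hΛ) hy hx

theorem IsC1Solution.exists_subseq_tendsto (hαβ : α ≤ β)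
    (hb : ∀ x y, IntervalIntegrable b volume x y) (hf : Continuous f)
    (hfK : ∀ s, |f s| ≤ K * |s|) {θ u w : ℕ → ℝ → ℝ} (hθ : ∀ n, Continuous (θ n))
    (hθ_mem : ∀ n, ∀ t ∈ Icc α β, θ n t ∈ Icc α t)
    (hθ_lim : ∀ t ∈ Icc α β, Tendsto (fun n => θ n t) atTop (nhds t))
    (H : ∀ n, IsC1Solution α β (fun t => b t * f (u n (θ n t))) (u n) (w n))
    {S : Set (ℝ × ℝ)} (hS : IsCompact S) (hS_mem : ∀ n, (u n α, w n α) ∈ S) :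
    ∃ u₀ w₀, ∃ φ : ℕ → ℕ, IsC1Solution α β (fun t => b t * f (u₀ t)) u₀ w₀ ∧ StrictMono φ ∧
      ∀ x ∈ Icc α β, Tendsto (fun n => (u (φ n) x, w (φ n) x)) atTop (nhds (u₀ x, w₀ x)) := by
  obtain ⟨B, Λ, hbd⟩ := exists_uniform_bounds hαβ hb hf hfK hS
  have hbd (n : ℕ) := hbd (θ n) (u n) (w n) (hθ n) (hθ_mem n) (H n) (hS_mem n)
  obtain ⟨⟨c, d⟩, -, ψ, hψ, hlim⟩ := hS.tendsto_subseq hS_mem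
  obtain ⟨u₀, χ, hu₀, hχ, hu⟩ := exists_subseq_tendsto_of_lipschitzOnWith hαβ
    (fun n => (hbd (ψ n)).1) fun n => (hbd (ψ n)).2.2
  have hw : Tendsto (fun n => w (ψ (χ n)) α) atTop (nhds d) :=
    ((continuous_snd.tendsto _).comp hlim).comp hχ.tendsto_atTop
  have hfu (n : ℕ) : Continuous fun t => f (u n (θ n t)) :=
    hf.comp ((H n).continuous.comp (hθ n))
  have hmem (n : ℕ) {t : ℝ} (ht : t ∈ Icc α β) : θ n t ∈ Icc α β :=
    Icc_subset_Icc_right ht.2 (hθ_mem n t ht)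
  obtain ⟨w₀, hsol, hw₀⟩ := exists_of_tendsto (g := fun t => |b t| * (|K| * B)) hαβ
    (fun n => H (ψ (χ n))) (fun n => intervalIntegrable_mul_of_continuous hb (hfu _) α β)
    ((hb α β).abs.mul_const _)
    (fun n t ht => by
      rw [abs_mul]
      exact mul_le_mul_of_nonneg_left ((hfK _).trans (mul_le_mul (le_abs_self K)
        ((hbd _).1 _ (hmem _ ht)) (abs_nonneg _) (abs_nonneg _))) (abs_nonneg _))
    (fun n => (hbd (ψ (χ n))).2.1)
    (intervalIntegrable_mul_of_continuous hb (hf.comp hu₀)) hu₀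
    (fun t ht => ((hf.tendsto _).comp (tendsto_comp_of_lipschitzOnWith
      (fun n => (hbd (ψ (χ n))).2.2) ht (fun n => hmem _ ht)
      ((hθ_lim t ht).comp (hψ.comp hχ).tendsto_atTop) (hu t ht))).const_mul _)
    hu hw
  exact ⟨u₀, w₀, ψ ∘ χ, hsol, hψ.comp hχ, fun x hx => (hu x hx).prodMk_nhds (hw₀ x hx)⟩

end Compactness

section ShootingMaps

/-- How far `(u, w)` is from taking the same values at `α` and at `β`, as a complex number, so
that winding arguments apply to it. -/
def periodicityDefect (α β : ℝ) (u w : ℝ → ℝ) : ℂ :=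
  ⟨u α - u β, w α - w β⟩

/- Solutions need not be unique, so there is no continuous shooting map. The delayed equations
provide continuous maps whose values accumulate only at defects of true solutions. -/
theorem exists_shooting_maps {α β K : ℝ} {b f : ℝ → ℝ} (hαβ : α ≤ β)
    (hb : ∀ x y, IntervalIntegrable b volume x y) (hf : Continuous f)
    (hfK : ∀ s, |f s| ≤ K * |s|) :
    ∃ G : ℕ → ℝ × ℝ → ℂ, (∀ n, Continuous (G n)) ∧ ∀ S A, IsCompact S → IsClosed A →
      (∀ u w, IsC1Solution α β (fun t => b t * f (u t)) u w → (u α, w α) ∈ S →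
        periodicityDefect α β u w ∉ A) → ∀ᶠ n in atTop, ∀ p ∈ S, G n p ∉ A := by
  set ε : ℕ → ℝ := fun n => 1 / ((n : ℝ) + 1)
  have hε (n : ℕ) : 0 < ε n := Nat.one_div_pos_of_nat
  choose U W hU hW hUW using fun n => exists_delayed_solutions hb hf hαβ (hε n)
  have hdefect : Continuous fun q : ℝ × ℝ => (⟨q.1, q.2⟩ : ℂ) :=
    Complex.equivRealProdCLM.symm.continuous
  refine ⟨fun n p => ⟨p.1 - U n p β, p.2 - W n p β⟩, fun n => hdefect.comp
    ((continuous_fst.sub (hU n β)).prodMk (continuous_snd.sub (hW n β))), ?_⟩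
  intro S A hS hA hnot
  by_contra hfreq
  rw [not_eventually] at hfreq
  obtain ⟨ψ, hψ, hbad⟩ := extraction_of_frequently_atTop hfreq
  push Not at hbad
  choose p hpS hpA using hbad
  have hεψ : Tendsto (fun n => ε (ψ n)) atTop (nhds 0) :=
    tendsto_one_div_add_atTop_nhds_zero_nat.comp hψ.tendsto_atTop
  have hθ_lim : ∀ t ∈ Icc α β, Tendsto (fun n => max (t - ε (ψ n)) α) atTop (nhds t) :=
    fun t ht => by
      simpa only [sub_zero, max_eq_left ht.1] using
        ((tendsto_const_nhds (x := t)).sub hεψ).max (tendsto_const_nhds (x := α))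
  obtain ⟨u, w, φ, H, -, hlim⟩ := IsC1Solution.exists_subseq_tendsto hαβ hb hf hfK
    (θ := fun n t => max (t - ε (ψ n)) α) (fun n => by fun_prop)
    (fun n t ht => ⟨le_max_right _ _, max_le (sub_le_self _ (hε _).le) ht.1⟩) hθ_lim
    (fun n => (hUW (ψ n) (p n)).2) hS fun n => (hUW (ψ n) (p n)).1.symm ▸ hpS n
  have hlim_α := hlim α (left_mem_Icc.2 hαβ)
  refine hnot u w H (hS.isClosed.mem_of_tendsto hlim_α
    (Eventually.of_forall fun n => (hUW _ _).1.symm ▸ hpS (φ n)))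
    (hA.mem_of_tendsto ((hdefect.tendsto _).comp (hlim_α.sub (hlim β (right_mem_Icc.2 hαβ))))
      (Eventually.of_forall fun n => ?_))
  simp only [(hUW _ _).1]
  exact hpA (φ n)

end ShootingMaps

section APrioriBound

variable {σ τ l : ℝ}

lemma mul_le_length_mul_of_concaveOn {u : ℝ → ℝ} (hu : ConcaveOn ℝ (Icc σ τ) u)
    (hu0 : ∀ x ∈ Icc σ τ, 0 ≤ u x) (hl : 0 < l) {y z : ℝ} (hy : y ∈ Icc (σ + l) (τ - l))
    (hz : z ∈ Icc σ τ) : l * u z ≤ (τ - σ) * u y := by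
  have hσy : σ < y := by linarith [hy.1]
  have hyτ : y < τ := by linarith [hy.2]
  have hσ : σ ∈ Icc σ τ := left_mem_Icc.2 (hσy.trans hyτ).le
  have hτ : τ ∈ Icc σ τ := right_mem_Icc.2 (hσy.trans hyτ).le
  have huy := hu0 y ⟨hσy.le, hyτ.le⟩
  have huz := hu0 z hz
  rcases lt_trichotomy y z with hyz | rfl | hzy
  · have hslope := hu.slope_anti_adjacent hσ hz hσy hyz
    rw [div_le_div_iff₀ (sub_pos.2 hyz) (sub_pos.2 hσy)] at hslope
    have := mul_nonneg (hu0 σ hσ) (sub_nonneg.2 hyz.le)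
    calc l * u z ≤ (y - σ) * u z := by gcongr; linarith [hy.1]
      _ ≤ (z - σ) * u y := by linarith
      _ ≤ (τ - σ) * u y := by gcongr; exact hz.2
  · gcongr
    linarith [hy.1]
  · have hslope := hu.slope_anti_adjacent hz hτ hzy hyτ
    rw [div_le_div_iff₀ (sub_pos.2 hyτ) (sub_pos.2 hzy)] at hslope
    have := mul_nonneg (hu0 τ hτ) (sub_nonneg.2 hzy.le)
    calc l * u z ≤ (τ - y) * u z := by gcongr; linarith [hy.2]
      _ ≤ (τ - z) * u y := by linarith
      _ ≤ (τ - σ) * u y := by gcongr; exact hz.1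

lemma IsC1Solution.deriv_sub_deriv_mul_le {h u w : ℝ → ℝ} {M : ℝ} (H : IsC1Solution σ τ h u w)
    (hh : ∀ᵐ t ∂volume.restrict (Icc σ τ), 0 ≤ h t) (hu0 : ∀ x ∈ Icc σ τ, 0 ≤ u x)
    (hM : ∀ x ∈ Icc σ τ, u x ≤ M) (hl : 0 ≤ l) (hlτ : l ≤ τ - σ) :
    (w (σ + l) - w (τ - l)) * l ≤ 2 * M := by
  have hστ : σ ≤ τ := by linarith
  have hx : σ + l ∈ Icc σ τ := ⟨by linarith, by linarith⟩
  have hy : τ - l ∈ Icc σ τ := ⟨by linarith, by linarith⟩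
  have hanti := H.antitoneOn_deriv hh
  have hleft := H.le_sub le_rfl hx.1 hx.2 fun t ht => hanti ⟨ht.1, ht.2.trans hx.2⟩ hx ht.2
  have hright := H.sub_le hy.1 hy.2 le_rfl fun t ht => hanti hy ⟨hy.1.trans ht.1, ht.2⟩ ht.1
  linarith [hM _ hx, hM _ hy, hu0 σ (left_mem_Icc.2 hστ), hu0 τ (right_mem_Icc.2 hστ)]

variable {b : ℝ → ℝ}

lemma lt_of_not_ae_restrict_Icc {P : ℝ → Prop}
    (hP : ¬ ∀ᵐ x ∂volume.restrict (Icc σ τ), P x) : σ < τ := by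
  by_contra! hle
  refine hP ?_
  rw [Measure.restrict_eq_zero.2 (by rw [Real.volume_Icc, ENNReal.ofReal_eq_zero]; linarith)]
  exact ae_zero.symm ▸ eventually_bot

lemma exists_integral_shrink_pos (hb : ∀ x y, IntervalIntegrable b volume x y)
    (hb0 : ∀ᵐ x ∂volume.restrict (Icc σ τ), 0 ≤ b x)
    (hne : ¬ ∀ᵐ x ∂volume.restrict (Icc σ τ), b x = 0) :
    ∃ l > 0, l < (τ - σ) / 2 ∧ 0 < ∫ t in (σ + l)..(τ - l), b t := by
  have hστ : σ < τ := lt_of_not_ae_restrict_Icc hne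
  have hint : 0 < ∫ t in σ..τ, b t := by
    refine (intervalIntegral.integral_nonneg_of_ae_restrict hστ.le hb0).lt_of_ne fun h0 => hne ?_
    rw [intervalIntegral.integral_of_le hστ.le, ← integral_Icc_eq_integral_Ioc] at h0
    exact (integral_eq_zero_iff_of_nonneg_ae hb0
      ((intervalIntegrable_iff_integrableOn_Icc_of_le hστ.le).1 (hb σ τ))).1 h0.symm
  have hcont : Continuous fun l => ∫ t in (σ + l)..(τ - l), b t := by
    have hprim := intervalIntegral.continuous_primitive hb 0
    exact ((hprim.comp (continuous_sub_left τ)).sub (hprim.comp (continuous_const_add σ))).congr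
      fun l => intervalIntegral.integral_interval_sub_left (hb _ _) (hb _ _)
  have hlim := hcont.tendsto 0
  rw [add_zero, sub_zero] at hlim
  obtain ⟨l, hl, hl0, hl2⟩ := (((hlim.mono_left nhdsWithin_le_nhds).eventually_const_lt hint).and
    (Ioo_mem_nhdsGT (show 0 < (τ - σ) / 2 by linarith))).exists
  exact ⟨l, hl0, hl2, hl⟩

lemma IsC1Solution.integral_mul_le_deriv_sub {f u w : ℝ → ℝ}
    (hb : ∀ x y, IntervalIntegrable b volume x y)
    (H : IsC1Solution σ τ (fun t => b t * f (u t)) u w) (hf : Continuous f) {x y c : ℝ}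
    (hx : σ ≤ x) (hxy : x ≤ y) (hy : y ≤ τ) (hb0 : ∀ᵐ t ∂volume.restrict (Icc x y), 0 ≤ b t)
    (hc : ∀ t ∈ Icc x y, c ≤ f (u t)) : (∫ t in x..y, b t) * c ≤ w x - w y := by
  rw [← neg_sub, H.deriv_sub_eq x ⟨hx, hxy.trans hy⟩ y ⟨hx.trans hxy, hy⟩, neg_neg,
    ← intervalIntegral.integral_mul_const]
  refine intervalIntegral.integral_mono_ae_restrict hxy ((hb _ _).mul_const _)
    (intervalIntegrable_mul_of_continuous hb (hf.comp H.continuous) _ _) ?_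
  filter_upwards [hb0, ae_restrict_mem measurableSet_Icc] with t ht htm
  exact mul_le_mul_of_nonneg_left (hc t htm) ht

/-- Every nonnegative solution of `u'' + b f(u) = 0` on `[σ, τ]` is bounded above by `R` there. -/
def HasAPrioriBound (b f : ℝ → ℝ) (σ τ R : ℝ) : Prop :=
  ∀ u w, IsC1Solution σ τ (fun t => b t * f (u t)) u w → (∀ x ∈ Icc σ τ, 0 ≤ u x) →
    ∀ x ∈ Icc σ τ, u x ≤ R

/- Concavity bounds the solution from below by a fixed multiple of its maximum `M` on a subinterval
carrying mass of `b`; if `M` is large, `u'` then drops there by more than concavity allows. -/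
theorem eventually_hasAPrioriBound (hb : ∀ x y, IntervalIntegrable b volume x y)
    (hb0 : ∀ᵐ x ∂volume.restrict (Icc σ τ), 0 ≤ b x)
    (hne : ¬ ∀ᵐ x ∂volume.restrict (Icc σ τ), b x = 0) :
    ∀ᶠ L in atTop, ∀ (f : ℝ → ℝ) (R : ℝ), Continuous f → (∀ s, 0 ≤ f s) → 0 < R →
      (∀ s, R ≤ s → L * s ≤ f s) → HasAPrioriBound b f σ τ (L * R) := by
  obtain ⟨l, hl, hlτ, hm⟩ := exists_integral_shrink_pos hb hb0 hne
  set m := ∫ t in (σ + l)..(τ - l), b t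
  have hlen : 0 < τ - σ := by linarith
  filter_upwards [eventually_ge_atTop ((τ - σ) / l),
    eventually_gt_atTop (2 * (τ - σ) / (l * l * m)), eventually_gt_atTop 0]
    with L hL₁ hL₂ hL f R hf hf0 hR hfL u w H hu0
  rw [div_le_iff₀ hl] at hL₁
  rw [div_lt_iff₀ (by positivity)] at hL₂
  obtain ⟨z, hz, hmax⟩ := isCompact_Icc.exists_isMaxOn (nonempty_Icc.2 (sub_pos.1 hlen).le)
    H.continuous.continuousOn
  refine fun x hx => (hmax hx).trans ?_
  by_contra! hlarge
  have hM : 0 < u z := (by positivity : 0 < L * R).trans hlarge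
  have hh : ∀ᵐ t ∂volume.restrict (Icc σ τ), 0 ≤ b t * f (u t) :=
    hb0.mono fun t ht => mul_nonneg ht (hf0 _)
  set κ := l / (τ - σ) * u z with hκ
  have hlow (y : ℝ) (hy : y ∈ Icc (σ + l) (τ - l)) : κ ≤ u y := by
    rw [hκ, div_mul_eq_mul_div, div_le_iff₀' hlen]
    exact mul_le_length_mul_of_concaveOn (H.concaveOn hh) hu0 hl hy hz
  have hRκ : R ≤ κ := by
    rw [hκ, div_mul_eq_mul_div, le_div_iff₀ hlen]
    calc R * (τ - σ) ≤ R * (L * l) := by gcongr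
      _ = l * (L * R) := by ring
      _ ≤ l * u z := by gcongr
  have hdrop : m * (L * κ) ≤ w (σ + l) - w (τ - l) := by
    refine H.integral_mul_le_deriv_sub hb hf (by linarith) (by linarith) (by linarith)
      (ae_restrict_of_ae_restrict_of_subset (Icc_subset_Icc (by linarith) (by linarith)) hb0)
      fun t ht => ?_
    exact (mul_le_mul_of_nonneg_left (hlow t ht) hL.le).trans (hfL _ (hRκ.trans (hlow t ht)))
  have hle := H.deriv_sub_deriv_mul_le hh hu0 (fun t ht => hmax ht) hl.le (by linarith)
  have hgt : 2 * u z < m * (L * κ) * l := by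
    calc 2 * u z = 2 * (τ - σ) * (u z / (τ - σ)) := by field_simp
      _ < L * (l * l * m) * (u z / (τ - σ)) := by gcongr
      _ = m * (L * κ) * l := by rw [hκ]; ring
  linarith [mul_le_mul_of_nonneg_right hdrop hl.le]

end APrioriBound

/-- The class of nonlinearities for which the boundary value problem is solved by shooting: `g` is
extended by zero to the negative half-line and cut off at infinity so as to grow at most
linearly. -/
structure IsTruncatedNonlinearity (K : ℝ) (f : ℝ → ℝ) : Prop where
  continuous : Continuous f
  eq_zero : ∀ s ≤ 0, f s = 0
  pos : ∀ s, 0 < s → 0 < f s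
  abs_le : ∀ s, |f s| ≤ K * |s|
  isLittleO : f =o[nhds 0] id
  regOscAtZero : RegOscAtZero f

namespace IsTruncatedNonlinearity

variable {K : ℝ} {f : ℝ → ℝ}

lemma nonneg (hf : IsTruncatedNonlinearity K f) (s : ℝ) : 0 ≤ f s :=
  (le_or_gt s 0).elim (fun hs => (hf.eq_zero s hs).ge) fun hs => (hf.pos s hs).le

lemma eventually_abs_le (hf : IsTruncatedNonlinearity K f) {ε : ℝ} (hε : 0 < ε) :
    ∀ᶠ ρ in nhdsWithin 0 (Ioi 0), ∀ s ≤ ρ, |f s| ≤ ε * ρ := by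
  obtain ⟨δ, hδ, hball⟩ := Metric.eventually_nhds_iff.1 (hf.isLittleO.def hε)
  filter_upwards [Ioo_mem_nhdsGT hδ] with ρ hρ s hs
  rcases le_or_gt s 0 with hs0 | hs0
  · rw [hf.eq_zero s hs0, abs_zero]
    exact mul_nonneg hε.le hρ.1.le
  · have hsδ : dist s 0 < δ := by
      rw [Real.dist_0_eq_abs, abs_of_pos hs0]
      exact hs.trans_lt hρ.2
    calc |f s| ≤ ε * |s| := hball hsδ
      _ ≤ ε * ρ := by rw [abs_of_pos hs0]; gcongr

lemma eventually_abs_sub_le (hf : IsTruncatedNonlinearity K f) {ε : ℝ} (hε : 0 < ε) :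
    ∃ η > 0, ∀ᶠ r in nhdsWithin 0 (Ioi 0), ∀ s, |s - r| < η * r → |f s - f r| ≤ ε * f r := by
  obtain ⟨δ, hδ, η, hη, hreg⟩ := hf.regOscAtZero ε hε
  refine ⟨η, hη, ?_⟩
  filter_upwards [Ioo_mem_nhdsGT hδ] with r ⟨hr, hrδ⟩ s hs
  have hfr := hf.pos r hr
  have hratio : |s / r - 1| < η := by
    rwa [div_sub_one hr.ne', abs_div, abs_of_pos hr, div_lt_iff₀ hr]
  have hclose := hreg r (s / r) hr hrδ hratio
  rw [div_mul_cancel₀ _ hr.ne', div_sub_one hfr.ne', abs_div, abs_of_pos hfr,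
    div_lt_iff₀ hfr] at hclose
  exact hclose.le

end IsTruncatedNonlinearity

section Crossing

lemma intervalIntegrable_comp_neg {b : ℝ → ℝ} (hb : ∀ x y, IntervalIntegrable b volume x y)
    (x y : ℝ) : IntervalIntegrable (fun t => b (-t)) volume x y := by
  simpa only [neg_neg] using (IntervalIntegrable.iff_comp_neg (by simp)).1 (hb (-x) (-y))

variable {α β K : ℝ} {b f u w : ℝ → ℝ}

lemma IsC1Solution.deriv_nonpos_of_first_zero {h : ℝ → ℝ} (H : IsC1Solution α β h u w)
    (hαβ : α < β) (hpos : ∀ x ∈ Ico α β, 0 < u x) (hβ : u β = 0) : w β ≤ 0 := by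
  by_contra! hw
  obtain ⟨l, r, hβ_mem, hsub⟩ := mem_nhds_iff_exists_Ioo_subset.1
    ((isOpen_lt continuous_const H.continuous_deriv).mem_nhds hw)
  obtain ⟨x, hx, hxβ⟩ := exists_between (max_lt hαβ hβ_mem.1)
  obtain ⟨hαx, hlx⟩ := max_lt_iff.1 hx
  have hinc := H.le_sub hαx.le hxβ.le le_rfl (K := 0) fun t ht =>
    (hsub ⟨hlx.trans_le ht.1, ht.2.trans_lt hβ_mem.2⟩).le
  linarith [hpos x ⟨hαx.le, hxβ⟩]

lemma IsC1Solution.deriv_neg_of_first_zero (hb : ∀ x y, IntervalIntegrable b volume x y)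
    (hf : IsTruncatedNonlinearity K f) (H : IsC1Solution α β (fun t => b t * f (u t)) u w)
    (hαβ : α < β) (hpos : ∀ x ∈ Ico α β, 0 < u x) (hβ : u β = 0) : w β < 0 := by
  refine (H.deriv_nonpos_of_first_zero hαβ hpos hβ).lt_of_ne fun hw => ?_
  have hα := H.reflect.eq_zero_of_initial_eq_zero (b := fun x => b (-x)) (x := -α)
    (intervalIntegrable_comp_neg hb) hf.continuous hf.abs_le (by rwa [neg_neg])
    (by rw [neg_neg, hw, neg_zero]) (right_mem_Icc.2 (neg_le_neg hαβ.le))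
  rw [neg_neg] at hα
  exact (hpos α ⟨le_rfl, hαβ⟩).ne' hα

lemma IsC1Solution.neg_continuation (hαβ : α ≤ β) (hf : ∀ s ≤ 0, f s = 0)
    (H : IsC1Solution α β (fun t => b t * f (u t)) u w) (hu : u α ≤ 0) (hw : w α < 0) :
    u β ≤ 0 ∧ w β < 0 := by
  have hα : α ∈ Icc α β := left_mem_Icc.2 hαβ
  have hle {x : ℝ} (hx : x ∈ Icc α β) (hwx : ∀ y ∈ Icc α x, w y ≤ w α / 2) : u x ≤ 0 := by
    have := H.sub_le le_rfl hx.1 hx.2 hwx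
    linarith [mul_nonpos_of_nonpos_of_nonneg (by linarith : w α / 2 ≤ 0) (sub_nonneg.2 hx.1)]
  have hlt : ∀ x ∈ Icc α β, w x < w α / 2 := by
    refine lt_on_Icc_of_le_imp_lt H.continuous_deriv continuous_const (by linarith)
      fun x hx hwx => ?_
    have hzero : ∫ t in α..x, b t * f (u t) = 0 := by
      refine (intervalIntegral.integral_congr fun t ht => ?_).trans intervalIntegral.integral_zero
      rw [uIcc_of_le hx.1] at ht
      simp only [hf _ (hle ⟨ht.1, ht.2.trans hx.2⟩ fun y hy => hwx y ⟨hy.1, hy.2.trans ht.2⟩),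
        mul_zero]
    linarith [H.deriv_sub_eq α hα x hx]
  have hβ : β ∈ Icc α β := right_mem_Icc.2 hαβ
  exact ⟨hle hβ fun y hy => (hlt y hy).le, (hlt β hβ).trans (by linarith)⟩

theorem IsC1Solution.neg_of_nonpos (hb : ∀ x y, IntervalIntegrable b volume x y)
    (hf : IsTruncatedNonlinearity K f) (H : IsC1Solution α β (fun t => b t * f (u t)) u w)
    (hα : 0 < u α) {x : ℝ} (hx : x ∈ Icc α β) (hux : u x ≤ 0) : u β ≤ 0 ∧ w β < 0 := by
  obtain ⟨z, ⟨hz, hz0⟩, hleast⟩ := (isCompact_Icc.inter_right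
    (isClosed_le H.continuous continuous_const)).exists_isLeast ⟨x, hx, hux⟩
  have hαz : α < z := hz.1.lt_of_ne (by rintro rfl; exact hα.not_ge hz0)
  have hpos : ∀ y ∈ Ico α z, 0 < u y := fun y hy =>
    lt_of_not_ge fun hle => (hleast ⟨⟨hy.1, hy.2.le.trans hz.2⟩, hle⟩).not_gt hy.2
  have hz_nonneg : 0 ≤ u z := by
    have hclosed := (isClosed_le continuous_const H.continuous : IsClosed {y | 0 ≤ u y})
    refine closure_minimal (fun y hy => (hpos y hy).le) hclosed ?_
    rw [closure_Ico hαz.ne]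
    exact right_mem_Icc.2 hαz.le
  have hwz := (H.mono (Icc_subset_Icc_right hz.2)).deriv_neg_of_first_zero hb hf hαz hpos
    (le_antisymm hz0 hz_nonneg)
  exact (H.mono (Icc_subset_Icc_left hz.1)).neg_continuation hz.2 hf.eq_zero hz0 hwz

end Crossing

section SmallSolutions

variable {α β K : ℝ} {b f : ℝ → ℝ}

lemma IsC1Solution.abs_sub_line_le (hb : ∀ x y, IntervalIntegrable b volume x y) {u w : ℝ → ℝ}
    (H : IsC1Solution α β (fun t => b t * f (u t)) u w) {B x : ℝ} (hx : x ∈ Icc α β)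
    (hB : ∀ t ∈ Icc α x, |f (u t)| ≤ B) :
    |u x - (u α + w α * (x - α))| ≤ (∫ t in α..β, |b t|) * B * (β - α) := by
  have hB0 : 0 ≤ B := (abs_nonneg _).trans (hB α (left_mem_Icc.2 hx.1))
  have hN : 0 ≤ ∫ t in α..β, |b t| :=
    intervalIntegral.integral_nonneg (hx.1.trans hx.2) fun t _ => abs_nonneg _
  have hw : ∀ t ∈ Icc α x, |w t - w α| ≤ (∫ t in α..β, |b t|) * B := fun t ht => by
    rw [H.deriv_sub_eq α (left_mem_Icc.2 (hx.1.trans hx.2)) t ⟨ht.1, ht.2.trans hx.2⟩, abs_neg]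
    exact abs_integral_mul_le hb le_rfl ht.1 (ht.2.trans hx.2) hB0
      fun s hs => hB s ⟨hs.1, hs.2.trans ht.2⟩
  have hle := H.sub_le le_rfl hx.1 hx.2 fun t ht => sub_le_iff_le_add'.1 (abs_le.1 (hw t ht)).2
  have hge := H.le_sub le_rfl hx.1 hx.2 fun t ht => le_sub_iff_add_le'.1 (abs_le.1 (hw t ht)).1
  have hlen := mul_le_mul_of_nonneg_left (sub_le_sub_right hx.2 α) (mul_nonneg hN hB0)
  exact abs_le.2 ⟨by linarith, by linarith⟩

lemma eventually_abs_sub_line_le (hαβ : α ≤ β) (hb : ∀ x y, IntervalIntegrable b volume x y)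
    (hf : IsTruncatedNonlinearity K f) {ε : ℝ} (hε : 0 < ε) (hε1 : ε < 1) :
    ∀ᶠ r in nhdsWithin 0 (Ioi 0), ∀ u w, IsC1Solution α β (fun t => b t * f (u t)) u w → u α = r →
      w α * (β - α) ≤ 3 * r → ∀ x ∈ Icc α β, |u x - (r + w α * (x - α))| ≤ ε * r := by
  have hlen : 0 ≤ β - α := sub_nonneg.2 hαβ
  set N := ∫ t in α..β, |b t|
  have hN : 0 ≤ N := intervalIntegral.integral_nonneg hαβ fun t _ => abs_nonneg _
  have hscale : Tendsto (fun r : ℝ => 5 * r) (nhdsWithin 0 (Ioi 0)) (nhdsWithin 0 (Ioi 0)) := by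
    have := (continuous_const_mul (5 : ℝ)).tendsto 0
    rw [mul_zero] at this
    exact tendsto_nhdsWithin_iff.2 ⟨this.mono_left nhdsWithin_le_nhds,
      eventually_mem_nhdsWithin.mono fun r (hr : 0 < r) => mul_pos (by norm_num : (0 : ℝ) < 5) hr⟩
  have hsmall := hf.eventually_abs_le (ε := ε / (5 * (N * (β - α) + 1))) (by positivity)
  filter_upwards [hscale.eventually hsmall, eventually_mem_nhdsWithin] with r hfr hr u w H huα hwα
  have hr : 0 < r := hr
  have hdev {x : ℝ} (hx : x ∈ Icc α β) (hux : ∀ y ∈ Icc α x, u y ≤ 5 * r) :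
      |u x - (r + w α * (x - α))| ≤ ε * r := by
    rw [← huα]
    refine (H.abs_sub_line_le hb hx fun t ht => hfr _ (hux t ht)).trans ?_
    calc N * (ε / (5 * (N * (β - α) + 1)) * (5 * r)) * (β - α)
        = N * (β - α) / (N * (β - α) + 1) * (ε * u α) := by rw [huα]; field_simp
      _ ≤ 1 * (ε * u α) := by
        gcongr
        · exact mul_nonneg hε.le (huα ▸ hr.le)
        · exact div_le_one_of_le₀ (by linarith) (by positivity)
      _ = ε * u α := one_mul _
  have hlt : ∀ x ∈ Icc α β, u x < 5 * r := by
    refine lt_on_Icc_of_le_imp_lt H.continuous continuous_const (by linarith) fun x hx hux => ?_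
    have hline : w α * (x - α) ≤ 3 * r := by
      rcases le_total (w α) 0 with hw | hw
      · linarith [mul_nonpos_of_nonpos_of_nonneg hw (sub_nonneg.2 hx.1)]
      · exact (mul_le_mul_of_nonneg_left (sub_le_sub_right hx.2 α) hw).trans hwα
    have hεr : ε * r < r := mul_lt_of_lt_one_left hr hε1
    linarith [(abs_le.1 (hdev hx hux)).2]
  exact fun x hx => hdev hx fun y hy => (hlt y ⟨hy.1, hy.2.trans hx.2⟩).le

theorem eventually_neg_of_deriv_le (hαβ : α ≤ β) (hb : ∀ x y, IntervalIntegrable b volume x y)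
    (hf : IsTruncatedNonlinearity K f) : ∀ᶠ r in nhdsWithin 0 (Ioi 0), ∀ u w,
      IsC1Solution α β (fun t => b t * f (u t)) u w → u α = r → w α * (β - α) ≤ -(3 * r) →
      u β < 0 := by
  filter_upwards [eventually_abs_sub_line_le hαβ hb hf (ε := 1 / 2) (by norm_num) (by norm_num),
    eventually_mem_nhdsWithin] with r hdev (hr : 0 < r) u w H huα hwα
  linarith [(abs_le.1 (hdev u w H huα (by linarith) β (right_mem_Icc.2 hαβ))).2]

theorem eventually_lt_of_deriv_eq (hαβ : α ≤ β) (hb : ∀ x y, IntervalIntegrable b volume x y)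
    (hf : IsTruncatedNonlinearity K f) : ∀ᶠ r in nhdsWithin 0 (Ioi 0), ∀ u w,
      IsC1Solution α β (fun t => b t * f (u t)) u w → u α = r → w α * (β - α) = 3 * r →
      r < u β := by
  filter_upwards [eventually_abs_sub_line_le hαβ hb hf (ε := 1 / 2) (by norm_num) (by norm_num),
    eventually_mem_nhdsWithin] with r hdev (hr : 0 < r) u w H huα hwα
  linarith [(abs_le.1 (hdev u w H huα hwα.le β (right_mem_Icc.2 hαβ))).1]

theorem eventually_deriv_lt_of_le (hαβ : α ≤ β) (hb : ∀ x y, IntervalIntegrable b volume x y)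
    (hf : IsTruncatedNonlinearity K f) : ∀ᶠ r in nhdsWithin 0 (Ioi 0), ∀ u w,
      IsC1Solution α β (fun t => b t * f (u t)) u w → 3 * r ≤ w α * (β - α) → u β = r → 0 < u α →
      w β < w α := by
  filter_upwards [eventually_neg_of_deriv_le (neg_le_neg hαβ)
    (b := fun x => b (-x)) (intervalIntegrable_comp_neg hb) hf] with r hneg u w H hwα huβ huα
  by_contra! hle
  have := hneg _ _ H.reflect (by rwa [neg_neg]) (by
    rw [neg_neg, neg_sub_neg, neg_mul]
    exact neg_le_neg (hwα.trans (mul_le_mul_of_nonneg_right hle (sub_nonneg.2 hαβ))))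
  rw [neg_neg] at this
  exact this.not_gt huα

lemma IsC1Solution.lt_deriv_of_abs_sub_le (hαβ : α ≤ β)
    (hb : ∀ x y, IntervalIntegrable b volume x y) (hf : Continuous f) {u w : ℝ → ℝ}
    (H : IsC1Solution α β (fun t => b t * f (u t)) u w) {c e : ℝ} (hc : 0 < c) (he : 0 ≤ e)
    (hlt : (∫ t in α..β, |b t|) * e < -∫ t in α..β, b t)
    (hclose : ∀ t ∈ Icc α β, |f (u t) - c| ≤ e * c) : w α < w β := by
  have hfu : Continuous fun t => f (u t) - c := (hf.comp H.continuous).sub continuous_const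
  have herr := abs_integral_mul_le hb le_rfl hαβ le_rfl (mul_nonneg he hc.le) hclose
  have hsplit : ∫ t in α..β, b t * f (u t) =
      (∫ t in α..β, b t) * c + ∫ t in α..β, b t * (f (u t) - c) := by
    rw [← intervalIntegral.integral_mul_const, ← intervalIntegral.integral_add
      ((hb α β).mul_const _) (intervalIntegrable_mul_of_continuous hb hfu α β)]
    simp only [mul_sub, add_sub_cancel]
  have hwβ := H.deriv_sub_eq α (left_mem_Icc.2 hαβ) β (right_mem_Icc.2 hαβ)
  have := mul_lt_mul_of_pos_right hlt hc
  linarith [(abs_le.1 herr).2]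

/- A solution that stays near the line of slope `w α` and returns to `r` (or starts flat) is close
to the constant `r`, so by regular oscillation `w β - w α` is close to `-f r * ∫ b`. -/
theorem eventually_lt_deriv_of_abs_le (hαβ : α ≤ β) (hb : ∀ x y, IntervalIntegrable b volume x y)
    (hbneg : ∫ t in α..β, b t < 0) (hf : IsTruncatedNonlinearity K f) :
    ∀ᶠ r in nhdsWithin 0 (Ioi 0), ∀ u w,
      IsC1Solution α β (fun t => b t * f (u t)) u w → u α = r → |w α| * (β - α) ≤ 3 * r →
      w α = 0 ∨ u β = r → w α < w β := by
  set N := ∫ t in α..β, |b t|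
  have hN : 0 ≤ N := intervalIntegral.integral_nonneg hαβ fun t _ => abs_nonneg _
  set e := -(∫ t in α..β, b t) / (N + 1)
  have he : 0 < e := div_pos (neg_pos.2 hbneg) (by positivity)
  have hNe : N * e < -∫ t in α..β, b t := by
    rw [mul_div_left_comm]
    exact mul_lt_of_lt_one_right (neg_pos.2 hbneg) ((div_lt_one (by positivity)).2 (lt_add_one N))
  obtain ⟨η, hη, hosc⟩ := hf.eventually_abs_sub_le he
  have hε : min (η / 3) (1 / 2) ≤ η / 3 := min_le_left _ _
  filter_upwards [eventually_abs_sub_line_le hαβ hb hf (ε := min (η / 3) (1 / 2)) (by positivity)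
    ((min_le_right _ _).trans_lt (by norm_num)), hosc, eventually_mem_nhdsWithin]
    with r hdev hosc (hr : 0 < r) u w H huα hwα hor
  have hβ : β ∈ Icc α β := right_mem_Icc.2 hαβ
  have hlen : 0 ≤ β - α := sub_nonneg.2 hαβ
  have hdev := hdev u w H huα ((mul_le_mul_of_nonneg_right (le_abs_self _) hlen).trans hwα)
  have hεr : min (η / 3) (1 / 2) * r ≤ η / 3 * r := mul_le_mul_of_nonneg_right hε hr.le
  have hslope : |w α| * (β - α) ≤ η / 3 * r := by
    rcases hor with h0 | h0
    · rw [h0, abs_zero, zero_mul]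
      positivity
    · have := hdev β hβ
      rw [h0, sub_add_cancel_left, abs_neg, abs_mul, abs_of_nonneg hlen] at this
      exact this.trans hεr
  refine H.lt_deriv_of_abs_sub_le hαβ hb hf.continuous (hf.pos r hr) he.le hNe fun t ht =>
    hosc _ ?_
  have hline : |w α * (t - α)| ≤ η / 3 * r := by
    rw [abs_mul, abs_of_nonneg (sub_nonneg.2 ht.1)]
    exact (mul_le_mul_of_nonneg_left (sub_le_sub_right ht.2 α) (abs_nonneg _)).trans hslope
  calc |u t - r| = |(u t - (r + w α * (t - α))) + w α * (t - α)| := by ring_nf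
    _ ≤ η / 3 * r + η / 3 * r := (abs_add_le _ _).trans (add_le_add ((hdev t ht).trans hεr) hline)
    _ < η * r := by linarith [mul_pos hη hr]

end SmallSolutions

section MaximumPrinciple

variable {α β R : ℝ} {h u w : ℝ → ℝ} {J : Set ℝ}

namespace IsC1Solution

lemma le_deriv_of_nonpos (H : IsC1Solution α β h u w) {x y : ℝ} (hx : α ≤ x) (hxy : x ≤ y)
    (hy : y ≤ β) (hh : ∀ᵐ t ∂volume.restrict (Icc x y), h t ≤ 0) : w x ≤ w y := by
  have hint := intervalIntegral.integral_nonneg_of_ae_restrict (f := fun t => -h t) hxy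
    (hh.mono fun t ht => neg_nonneg.2 ht)
  rw [intervalIntegral.integral_neg, ← H.deriv_sub_eq x ⟨hx, hxy.trans hy⟩ y ⟨hx.trans hxy, hy⟩]
    at hint
  exact sub_nonneg.1 hint

lemma le_of_deriv_nonneg_left (H : IsC1Solution α β h u w)
    (hh : ∀ᵐ t ∂volume.restrict (Icc α β \ J), h t ≤ 0) (hJ : ∀ x ∈ J, u x ≤ R)
    (hne : (Icc α β ∩ J).Nonempty) (hw : 0 ≤ w α) : u α ≤ R := by
  obtain ⟨j, hj, hjJ⟩ := hne
  obtain ⟨y, ⟨hy, hyR⟩, hleast⟩ := (isCompact_Icc.inter_right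
    (isClosed_le H.continuous continuous_const)).exists_isLeast ⟨j, hj, hJ j hjJ⟩
  have hsub : Ico α y ⊆ Icc α β \ J := fun t ht =>
    have htβ : t ∈ Icc α β := ⟨ht.1, ht.2.le.trans hy.2⟩
    ⟨htβ, fun htJ => (hleast ⟨htβ, hJ t htJ⟩).not_gt ht.2⟩
  have hαy : ∀ᵐ t ∂volume.restrict (Icc α y), h t ≤ 0 := by
    rw [← restrict_Ico_eq_restrict_Icc]
    exact ae_restrict_of_ae_restrict_of_subset hsub hh
  have hinc := H.le_sub (K := 0) le_rfl hy.1 hy.2 fun t ht =>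
    hw.trans (H.le_deriv_of_nonpos le_rfl ht.1 (ht.2.trans hy.2)
      (ae_restrict_of_ae_restrict_of_subset (Icc_subset_Icc_right ht.2) hαy))
  have hyR : u y ≤ R := hyR
  linarith

lemma le_of_deriv_nonpos_right (H : IsC1Solution α β h u w)
    (hh : ∀ᵐ t ∂volume.restrict (Icc α β \ J), h t ≤ 0) (hJ : ∀ x ∈ J, u x ≤ R)
    (hne : (Icc α β ∩ J).Nonempty) (hw : w β ≤ 0) : u β ≤ R := by
  have hIcc : Icc (-β) (-α) \ Neg.neg ⁻¹' J = Neg.neg ⁻¹' (Icc α β \ J) := by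
    ext x
    simp only [Set.mem_sdiff, mem_preimage, neg_mem_Icc_iff]
  have hle := H.reflect.le_of_deriv_nonneg_left (J := Neg.neg ⁻¹' J) (R := R) (by
    rw [hIcc]
    exact ((Measure.measurePreserving_neg volume).restrict_preimage_emb
      measurableEmbedding_neg _).quasiMeasurePreserving.ae hh) (fun x hx => hJ _ hx)
    ((nonempty_neg.2 hne).mono fun x hx => ⟨neg_mem_Icc_iff.1 hx.1, hx.2⟩)
    (by rwa [neg_neg, neg_nonneg])
  rwa [neg_neg] at hle

theorem le_of_isMaxOn (H : IsC1Solution α β h u w)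
    (hh : ∀ᵐ t ∂volume.restrict (Icc α β \ J), h t ≤ 0) (hJ : ∀ x ∈ J, u x ≤ R)
    (hne : (Icc α β ∩ J).Nonempty) {z : ℝ} (hz : z ∈ Icc α β) (hw : w z = 0)
    (hmax : IsMaxOn u (Icc α β) z) : ∀ x ∈ Icc α β, u x ≤ R := by
  intro x hx
  refine (hmax hx).trans ?_
  obtain ⟨j, hj, hjJ⟩ := hne
  rcases le_total z j with hzj | hjz
  · have hsub : Icc z β ⊆ Icc α β := Icc_subset_Icc_left hz.1
    exact (H.mono hsub).le_of_deriv_nonneg_left (ae_restrict_of_ae_restrict_of_subset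
      (sdiff_subset_sdiff_left hsub) hh) hJ ⟨j, ⟨hzj, hj.2⟩, hjJ⟩ hw.ge
  · have hsub : Icc α z ⊆ Icc α β := Icc_subset_Icc_right hz.2
    exact (H.mono hsub).le_of_deriv_nonpos_right (ae_restrict_of_ae_restrict_of_subset
      (sdiff_subset_sdiff_left hsub) hh) hJ ⟨j, ⟨hj.1, hjz⟩, hjJ⟩ hw.le

lemma exists_isMaxOn_of_neumann (hαβ : α ≤ β) (H : IsC1Solution α β h u w) (hα : w α = 0)
    (hβ : w β = 0) : ∃ z ∈ Icc α β, w z = 0 ∧ IsMaxOn u (Icc α β) z := by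
  obtain ⟨z, hz, hmax⟩ := isCompact_Icc.exists_isMaxOn (nonempty_Icc.2 hαβ)
    H.continuous.continuousOn
  refine ⟨z, hz, ?_, hmax⟩
  rcases eq_endpoints_or_mem_Ioo_of_mem_Icc hz with rfl | rfl | hz
  · exact hα
  · exact hβ
  · exact (hmax.isLocalMax (Icc_mem_nhds hz.1 hz.2)).hasDerivAt_eq_zero (H.hasDerivAt hz)

lemma exists_isMaxOn_of_periodic {T : ℝ} (hT : 0 < T) (H : ∀ x y, IsC1Solution x y h u w)
    (hu : Function.Periodic u T) : ∃ z ∈ Icc 0 T, w z = 0 ∧ IsMaxOn u (Icc 0 T) z := by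
  obtain ⟨z, hz, hmax⟩ := isCompact_Icc.exists_isMaxOn (nonempty_Icc.2 hT.le)
    (H 0 T).continuous.continuousOn
  refine ⟨z, hz, ?_, hmax⟩
  have hglobal (x : ℝ) : u x ≤ u z := by
    obtain ⟨y, hy, hxy⟩ := hu.exists_mem_Ico₀ hT x
    exact hxy ▸ hmax (Ico_subset_Icc_self hy)
  exact IsLocalMax.hasDerivAt_eq_zero (Eventually.of_forall hglobal)
    ((H (z - 1) (z + 1)).hasDerivAt ⟨sub_one_lt z, lt_add_one z⟩)

end IsC1Solution

end MaximumPrinciple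

section Truncation

variable {g : ℝ → ℝ} {R : ℝ}

lemma CondG1.exists_le_mul (hg : CondG1 g)
    (hg0 : Tendsto (fun s => g s / s) (nhdsWithin 0 (Ioi 0)) (nhds 0)) (R : ℝ) :
    ∃ K, ∀ s ∈ Icc 0 R, g s ≤ K * s := by
  obtain ⟨hcont, -, hzero, -⟩ := hg
  obtain ⟨δ, hδ, hsmall⟩ := mem_nhdsGT_iff_exists_Ioo_subset.1
    (hg0.eventually_lt_const zero_lt_one)
  have hδ : 0 < δ := hδ
  obtain ⟨B, hB⟩ := isCompact_Icc.exists_bound_of_continuousOn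
    (hcont.mono (Icc_subset_Ici_self : Icc 0 R ⊆ Ici 0))
  refine ⟨max 1 (B / δ), fun s hs => ?_⟩
  rcases hs.1.eq_or_lt with rfl | hs0
  · rw [hzero, mul_zero]
  rcases lt_or_ge s δ with hsδ | hsδ
  · have hratio : g s / s < 1 := hsmall ⟨hs0, hsδ⟩
    exact (div_le_iff₀ hs0).1 (hratio.le.trans (le_max_left _ _))
  · have hBs := (le_abs_self _).trans (hB s hs)
    have hB0 : 0 ≤ B := (norm_nonneg _).trans (hB s hs)
    calc g s ≤ B / δ * δ := by rwa [div_mul_cancel₀ _ hδ.ne']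
      _ ≤ max 1 (B / δ) * s := by gcongr; exact le_max_right _ _

lemma RegOscAtZero.of_eqOn (hg : RegOscAtZero g) (hR : 0 < R) {f : ℝ → ℝ}
    (hfg : EqOn f g (Icc 0 R)) : RegOscAtZero f := by
  intro ε hε
  obtain ⟨δ, hδ, η, hη, hosc⟩ := hg ε hε
  refine ⟨min δ (R / 2), by positivity, min η 1, by positivity, fun s ω hs hsδ hω => ?_⟩
  obtain ⟨hsδ, hsR⟩ := lt_min_iff.1 hsδ
  obtain ⟨hωη, hω1⟩ := lt_min_iff.1 hω
  obtain ⟨hω0, hω2⟩ := abs_lt.1 hω1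
  have hωs : ω * s ≤ 2 * s := mul_le_mul_of_nonneg_right (by linarith) hs.le
  rw [hfg ⟨hs.le, by linarith⟩, hfg ⟨mul_nonneg (by linarith) hs.le, by linarith⟩]
  exact hosc s ω hs hsδ hωη

/-- The nonlinearity `g` extended by zero to the negative half-line and capped by the linear
function of slope `K`. -/
def truncate (g : ℝ → ℝ) (K s : ℝ) : ℝ := min (g (max s 0)) (K * max s 0)

lemma truncate_of_nonneg (g : ℝ → ℝ) (K : ℝ) {s : ℝ} (hs : 0 ≤ s) :
    truncate g K s = min (g s) (K * s) := by
  rw [truncate, max_eq_left hs]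

lemma truncate_of_nonpos (hg : g 0 = 0) (K : ℝ) {s : ℝ} (hs : s ≤ 0) : truncate g K s = 0 := by
  rw [truncate, max_eq_right hs, hg, mul_zero, min_self]

lemma truncate_pos (hg : CondG1 g) {K s : ℝ} (hK : 0 < K) (hs : 0 < s) : 0 < truncate g K s := by
  rw [truncate_of_nonneg g K hs.le]
  exact lt_min (hg.2.2.2 s hs) (mul_pos hK hs)

lemma truncate_isLittleO (hg : CondG1 g)
    (hg0 : Tendsto (fun s => g s / s) (nhdsWithin 0 (Ioi 0)) (nhds 0)) {K : ℝ} (hK : 0 < K) :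
    truncate g K =o[nhds 0] id := by
  refine Asymptotics.IsLittleO.of_bound fun ε hε => ?_
  have hsmall := eventually_nhdsWithin_iff.1 (hg0.eventually_lt_const hε)
  filter_upwards [hsmall] with s hgs
  rw [Real.norm_eq_abs, Real.norm_eq_abs, id]
  rcases le_or_gt s 0 with hs | hs
  · rw [truncate_of_nonpos hg.2.2.1 K hs, abs_zero]
    positivity
  · rw [abs_of_pos (truncate_pos hg hK hs), abs_of_pos hs, truncate_of_nonneg g K hs.le]
    exact (min_le_left _ _).trans ((div_lt_iff₀ hs).1 (hgs hs)).le

theorem isTruncatedNonlinearity_truncate (hg : CondG1 g) (hreg : RegOscAtZero g)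
    (hg0 : Tendsto (fun s => g s / s) (nhdsWithin 0 (Ioi 0)) (nhds 0)) (hR : 0 < R) {K : ℝ}
    (hK : 0 < K) (hgK : ∀ s ∈ Icc 0 R, g s ≤ K * s) :
    IsTruncatedNonlinearity K (truncate g K) where
  continuous := (hg.1.comp_continuous (by fun_prop) fun s => le_max_right s 0).min (by fun_prop)
  eq_zero s hs := truncate_of_nonpos hg.2.2.1 K hs
  pos s hs := truncate_pos hg hK hs
  abs_le s := by
    rcases le_or_gt s 0 with hs | hs
    · rw [truncate_of_nonpos hg.2.2.1 K hs, abs_zero]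
      positivity
    · rw [abs_of_pos (truncate_pos hg hK hs), abs_of_pos hs, truncate_of_nonneg g K hs.le]
      exact min_le_right _ _
  isLittleO := truncate_isLittleO hg hg0 hK
  regOscAtZero := hreg.of_eqOn hR fun s hs => by
    rw [truncate_of_nonneg g K hs.1, min_eq_left (hgK s hs)]

theorem exists_isTruncatedNonlinearity (hg : CondG1 g) (hreg : RegOscAtZero g)
    (hg0 : Tendsto (fun s => g s / s) (nhdsWithin 0 (Ioi 0)) (nhds 0)) (hR : 0 < R)
    {L R₀ : ℝ} (hR₀ : 0 ≤ R₀) (hL : ∀ s, R₀ ≤ s → L * s ≤ g s) :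
    ∃ K f, IsTruncatedNonlinearity K f ∧ EqOn f g (Icc 0 R) ∧ ∀ s, R₀ ≤ s → L * s ≤ f s := by
  obtain ⟨K₀, hK₀⟩ := hg.exists_le_mul hg0 R
  set K := max (max K₀ L) 1
  have hK : 0 < K := zero_lt_one.trans_le (le_max_right _ _)
  have hK₀K : K₀ ≤ K := (le_max_left _ _).trans (le_max_left _ _)
  have hLK : L ≤ K := (le_max_right _ _).trans (le_max_left _ _)
  have hgK : ∀ s ∈ Icc 0 R, g s ≤ K * s := fun s hs =>
    (hK₀ s hs).trans (mul_le_mul_of_nonneg_right hK₀K hs.1)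
  refine ⟨K, truncate g K, isTruncatedNonlinearity_truncate hg hreg hg0 hR hK hgK,
    fun s hs => ?_, fun s hs => ?_⟩
  · rw [truncate_of_nonneg g K hs.1, min_eq_left (hgK s hs)]
  · rw [truncate_of_nonneg g K (hR₀.trans hs)]
    exact le_min (hL s hs) (mul_le_mul_of_nonneg_right hLK (hR₀.trans hs))

end Truncation

section Shooting

variable {α β K : ℝ} {b f : ℝ → ℝ}

theorem exists_solution_of_shooting_segment (hαβ : α ≤ β)
    (hb : ∀ x y, IntervalIntegrable b volume x y) (hf : Continuous f)
    (hfK : ∀ s, |f s| ≤ K * |s|) {r C : ℝ} (hrC : r ≤ C)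
    (hr : ∀ u w, IsC1Solution α β (fun t => b t * f (u t)) u w → u α = r → w α = 0 → w α < w β)
    (hC : ∀ u w, IsC1Solution α β (fun t => b t * f (u t)) u w → u α = C → w α = 0 → w β < w α) :
    ∃ u w, IsC1Solution α β (fun t => b t * f (u t)) u w ∧ u α ∈ Icc r C ∧ w α = 0 ∧ w β = 0 := by
  obtain ⟨G, hG, hex⟩ := exists_shooting_maps hαβ hb hf hfK
  by_contra! hno
  have hleft := hex {(r, 0)} {z | 0 ≤ z.im} isCompact_singleton
    (isClosed_le continuous_const Complex.continuous_im) fun u w H hini =>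
      (sub_neg.2 (hr u w H (congrArg Prod.fst hini) (congrArg Prod.snd hini))).not_ge
  have hright := hex {(C, 0)} {z | z.im ≤ 0} isCompact_singleton
    (isClosed_le Complex.continuous_im continuous_const) fun u w H hini =>
      (sub_pos.2 (hC u w H (congrArg Prod.fst hini) (congrArg Prod.snd hini))).not_ge
  have hmid := hex (Icc r C ×ˢ {0}) {z | z.im = 0} (isCompact_Icc.prod isCompact_singleton)
    (isClosed_eq Complex.continuous_im continuous_const) fun u w H hini him =>
      hno u w H hini.1 hini.2 ((sub_eq_zero.1 him).symm.trans hini.2)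
  obtain ⟨n, hnl, hnr, hnm⟩ := (hleft.and (hright.and hmid)).exists
  have hcont : Continuous fun c => (G n (c, 0)).im :=
    Complex.continuous_im.comp ((hG n).comp (Continuous.prodMk_left 0))
  obtain ⟨c, hc, hc0⟩ := intermediate_value_Icc hrC hcont.continuousOn
    ⟨(not_le.1 (hnl _ rfl)).le, (not_le.1 (hnr _ rfl)).le⟩
  exact hnm (c, 0) ⟨hc, rfl⟩ hc0

theorem exists_solution_of_shooting_rectangle (hαβ : α ≤ β)
    (hb : ∀ x y, IntervalIntegrable b volume x y) (hf : Continuous f)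
    (hfK : ∀ s, |f s| ≤ K * |s|) {r C d₀ e d₁ : ℝ} (hrC : r ≤ C) (hd₀ : d₀ ≤ e) (hd₁ : e ≤ d₁)
    (hout : ∀ u w, IsC1Solution α β (fun t => b t * f (u t)) u w → u α ∈ Icc r C →
      u α = C ∨ w α = d₀ ∨ w α = d₁ → u β < u α)
    (hlow : ∀ u w, IsC1Solution α β (fun t => b t * f (u t)) u w → u α = r → w α ≤ e →
      u β = r → w α < w β)
    (hmid : ∀ u w, IsC1Solution α β (fun t => b t * f (u t)) u w → u α = r → w α = e → r < u β)
    (hupp : ∀ u w, IsC1Solution α β (fun t => b t * f (u t)) u w → u α = r → e ≤ w α →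
      u β = r → w β < w α) :
    ∃ u w, IsC1Solution α β (fun t => b t * f (u t)) u w ∧ u α ∈ Icc r C ∧ u β = u α ∧
      w β = w α := by
  obtain ⟨G, hG, hex⟩ := exists_shooting_maps hαβ hb hf hfK
  by_contra! hno
  have hclosed_re0 : IsClosed {z : ℂ | z.re = 0} :=
    isClosed_eq Complex.continuous_re continuous_const
  have hsides : IsClosed {p : ℝ × ℝ | p.1 = C ∨ p.2 = d₀ ∨ p.2 = d₁} :=
    (isClosed_eq continuous_fst continuous_const).union
      ((isClosed_eq continuous_snd continuous_const).union
        (isClosed_eq continuous_snd continuous_const))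
  have hout := hex (Icc r C ×ˢ Icc d₀ d₁ ∩ {p | p.1 = C ∨ p.2 = d₀ ∨ p.2 = d₁}) {z | z.re ≤ 0}
    ((isCompact_Icc.prod isCompact_Icc).inter_right hsides)
    (isClosed_le Complex.continuous_re continuous_const) fun u w H hini =>
      (sub_pos.2 (hout u w H hini.1.1 hini.2)).not_ge
  have hlow := hex ({r} ×ˢ Icc d₀ e) {z | z.re = 0 ∧ 0 ≤ z.im}
    (isCompact_singleton.prod isCompact_Icc)
    (hclosed_re0.inter (isClosed_le continuous_const Complex.continuous_im)) fun u w H hini hz =>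
      (sub_neg.2 (hlow u w H hini.1 hini.2.2 ((sub_eq_zero.1 hz.1).symm.trans hini.1))).not_ge hz.2
  have hmid := hex {(r, e)} {z | 0 ≤ z.re} isCompact_singleton
    (isClosed_le continuous_const Complex.continuous_re) fun u w H hini =>
      have huα : u α = r := congrArg Prod.fst hini
      (sub_neg.2 (huα ▸ hmid u w H huα (congrArg Prod.snd hini))).not_ge
  have hupp := hex ({r} ×ˢ Icc e d₁) {z | z.re = 0 ∧ z.im ≤ 0}
    (isCompact_singleton.prod isCompact_Icc)
    (hclosed_re0.inter (isClosed_le Complex.continuous_im continuous_const)) fun u w H hini hz =>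
      (sub_pos.2 (hupp u w H hini.1 hini.2.1 ((sub_eq_zero.1 hz.1).symm.trans hini.1))).not_ge hz.2
  have hzero := hex (Icc r C ×ˢ Icc d₀ d₁) {0} (isCompact_Icc.prod isCompact_Icc)
    isClosed_singleton fun u w H hini hz =>
      hno u w H hini.1 (sub_eq_zero.1 (congrArg Complex.re hz)).symm
        (sub_eq_zero.1 (congrArg Complex.im hz)).symm
  obtain ⟨n, hout, hlow, hmid, hupp, hzero⟩ :=
    (hout.and (hlow.and (hmid.and (hupp.and hzero)))).exists
  have hd : d₀ ≤ d₁ := hd₀.trans hd₁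
  obtain ⟨x, hx, hGx⟩ := exists_eq_zero_of_rectangle (hG n) hrC hd₀ hd₁
    (fun c hc => not_le.1 (hout (c, d₀) ⟨⟨hc, left_mem_Icc.2 hd⟩, Or.inr (Or.inl rfl)⟩))
    (fun d hd => not_le.1 (hout (C, d) ⟨⟨right_mem_Icc.2 hrC, hd⟩, Or.inl rfl⟩))
    (fun c hc => not_le.1 (hout (c, d₁) ⟨⟨hc, right_mem_Icc.2 hd⟩, Or.inr (Or.inr rfl)⟩))
    (fun d hd h0 => not_le.1 fun him => hlow (r, d) ⟨rfl, hd⟩ ⟨h0, him⟩)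
    (not_le.1 (hmid (r, e) rfl))
    (fun d hd h0 => not_le.1 fun him => hupp (r, d) ⟨rfl, hd⟩ ⟨h0, him⟩)
  exact hzero x hx hGx

end Shooting

section PositiveSolutions

variable {α β K R : ℝ} {b f : ℝ → ℝ}

lemma IsC1Solution.pos_of_right_endpoint {u w : ℝ → ℝ}
    (hb : ∀ x y, IntervalIntegrable b volume x y) (hf : IsTruncatedNonlinearity K f)
    (H : IsC1Solution α β (fun t => b t * f (u t)) u w) (hα : 0 < u α) (hβ : 0 < u β ∨ 0 ≤ w β) :
    ∀ x ∈ Icc α β, 0 < u x := by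
  intro x hx
  by_contra! hux
  obtain ⟨huβ, hwβ⟩ := H.neg_of_nonpos hb hf hα hx hux
  exact hβ.elim huβ.not_gt hwβ.not_ge

lemma IsC1Solution.abs_deriv_mul_le {u w : ℝ → ℝ} (hαβ : α ≤ β)
    (hb : ∀ x y, IntervalIntegrable b volume x y) (hf : IsTruncatedNonlinearity K f)
    (H : IsC1Solution α β (fun t => b t * f (u t)) u w) (hu : ∀ x ∈ Icc α β, u x ∈ Icc 0 R) :
    |w α| * (β - α) ≤ R + (∫ t in α..β, |b t|) * (K * R) * (β - α) := by
  have hβ : β ∈ Icc α β := right_mem_Icc.2 hαβ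
  have hK : 0 ≤ K := by simpa using (abs_nonneg _).trans (hf.abs_le 1)
  have hline := H.abs_sub_line_le hb hβ fun t ht => (hf.abs_le (u t)).trans (by
    rw [abs_of_nonneg (hu t ht).1]
    exact mul_le_mul_of_nonneg_left (hu t ht).2 hK)
  obtain ⟨hα₀, hαR⟩ := hu α (left_mem_Icc.2 hαβ)
  obtain ⟨hβ₀, hβR⟩ := hu β hβ
  obtain ⟨hlo, hhi⟩ := abs_le.1 hline
  rw [← abs_of_nonneg (sub_nonneg.2 hαβ), ← abs_mul, abs_of_nonneg (sub_nonneg.2 hαβ)]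
  exact abs_le.2 ⟨by linarith, by linarith⟩

theorem exists_positive_neumann_solution (hαβ : α ≤ β)
    (hb : ∀ x y, IntervalIntegrable b volume x y) (hbneg : ∫ t in α..β, b t < 0)
    (hf : IsTruncatedNonlinearity K f) {J : Set ℝ} (hJ : (Icc α β ∩ J).Nonempty)
    (hbJ : ∀ᵐ t ∂volume.restrict (Icc α β \ J), b t ≤ 0) (hR : 0 ≤ R)
    (hbound : ∀ u w, IsC1Solution α β (fun t => b t * f (u t)) u w →
      (∀ x ∈ Icc α β, 0 < u x) → ∀ x ∈ J, u x ≤ R) :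
    ∃ u w, IsC1Solution α β (fun t => b t * f (u t)) u w ∧ (∀ x ∈ Icc α β, 0 < u x ∧ u x ≤ R) ∧
      w α = 0 ∧ w β = 0 := by
  obtain ⟨r, hflat, hr, hrR⟩ := ((eventually_lt_deriv_of_abs_le hαβ hb hbneg hf).and
    (Ioo_mem_nhdsGT (by linarith : (0 : ℝ) < R + 1))).exists
  have hsign (u : ℝ → ℝ) : ∀ᵐ t ∂volume.restrict (Icc α β \ J), b t * f (u t) ≤ 0 :=
    hbJ.mono fun t ht => mul_nonpos_of_nonpos_of_nonneg ht (hf.nonneg _)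
  obtain ⟨u, w, H, hu, hwα, hwβ⟩ := exists_solution_of_shooting_segment hαβ hb hf.continuous
    hf.abs_le hrR.le
    (fun u w H huα hwα => hflat u w H huα (by rw [hwα, abs_zero, zero_mul]; positivity)
      (Or.inl hwα))
    (fun u w H huα hwα => by
      by_contra! hle
      have hpos := H.pos_of_right_endpoint hb hf (by linarith) (Or.inr (hwα ▸ hle))
      linarith [H.le_of_deriv_nonneg_left (hsign u) (hbound u w H hpos) hJ hwα.ge])
  have hpos := H.pos_of_right_endpoint hb hf (hr.trans_le hu.1) (Or.inr hwβ.ge)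
  obtain ⟨z, hz, hwz, hmax⟩ := H.exists_isMaxOn_of_neumann hαβ hwα hwβ
  exact ⟨u, w, H, fun x hx => ⟨hpos x hx, H.le_of_isMaxOn (hsign u) (hbound u w H hpos) hJ hz hwz
    hmax x hx⟩, hwα, hwβ⟩

lemma exists_initial_bound_of_pos (hb : ∀ x y, IntervalIntegrable b volume x y)
    (hf : IsTruncatedNonlinearity K f) {τ : ℝ} (hτ : τ ∈ Ioc α β)
    (hbound : ∀ u w, IsC1Solution α β (fun t => b t * f (u t)) u w →
      (∀ x ∈ Icc α β, 0 < u x) → ∀ x ∈ Icc α τ, u x ≤ R) :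
    ∃ D, ∀ u w, IsC1Solution α β (fun t => b t * f (u t)) u w → (∀ x ∈ Icc α β, 0 < u x) →
      u α ≤ R ∧ |w α| < D := by
  set M := R + (∫ t in α..τ, |b t|) * (K * R) * (τ - α)
  refine ⟨M / (τ - α) + 1, fun u w H hpos => ?_⟩
  have huR := hbound u w H hpos
  have hsub : Icc α τ ⊆ Icc α β := Icc_subset_Icc_right hτ.2
  have hw := (H.mono hsub).abs_deriv_mul_le hτ.1.le hb hf
    fun x hx => ⟨(hpos x (hsub hx)).le, huR x hx⟩
  exact ⟨huR α (left_mem_Icc.2 hτ.1.le),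
    ((le_div_iff₀ (sub_pos.2 hτ.1)).2 hw).trans_lt (lt_add_one _)⟩

lemma eventually_exists_separating_slope (hαβ : α < β)
    (hb : ∀ x y, IntervalIntegrable b volume x y) (hbneg : ∫ t in α..β, b t < 0)
    (hf : IsTruncatedNonlinearity K f) :
    ∀ᶠ r in nhdsWithin (0 : ℝ) (Ioi 0), ∃ e > 0,
      ∀ u w, IsC1Solution α β (fun t => b t * f (u t)) u w → u α = r →
        (w α ≤ e → u β = r → w α < w β) ∧ (w α = e → r < u β) ∧
        (e ≤ w α → u β = r → w β < w α) := by
  have hlen : 0 < β - α := sub_pos.2 hαβ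
  filter_upwards [eventually_neg_of_deriv_le hαβ.le hb hf, eventually_lt_of_deriv_eq hαβ.le hb hf,
    eventually_deriv_lt_of_le hαβ.le hb hf, eventually_lt_deriv_of_abs_le hαβ.le hb hbneg hf,
    self_mem_nhdsWithin] with r hsteep hslope hback hflat hr
  have hr : 0 < r := hr
  set e := 3 * r / (β - α)
  have he_mul : e * (β - α) = 3 * r := div_mul_cancel₀ _ hlen.ne'
  refine ⟨e, by positivity, fun u w H huα => ⟨fun hwe huβ => ?_, fun hwα => ?_, fun hwe huβ => ?_⟩⟩
  · have hlo : -e ≤ w α := by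
      by_contra! hlt
      refine (hsteep u w H huα ?_).not_gt (huβ ▸ hr)
      rw [← he_mul, ← neg_mul]
      exact mul_le_mul_of_nonneg_right hlt.le hlen.le
    refine hflat u w H huα ?_ (Or.inr huβ)
    rw [← he_mul]
    exact mul_le_mul_of_nonneg_right (abs_le.2 ⟨hlo, hwe⟩) hlen.le
  · exact hslope u w H huα (by rw [hwα, he_mul])
  · exact hback u w H (he_mul ▸ mul_le_mul_of_nonneg_right hwe hlen.le) huβ (huα ▸ hr)

theorem exists_positive_periodic_solution (hαβ : α < β)
    (hb : ∀ x y, IntervalIntegrable b volume x y) (hbneg : ∫ t in α..β, b t < 0)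
    (hf : IsTruncatedNonlinearity K f) {τ : ℝ} (hτ : τ ∈ Ioc α β) (hR : 0 ≤ R)
    (hbound : ∀ u w, IsC1Solution α β (fun t => b t * f (u t)) u w →
      (∀ x ∈ Icc α β, 0 < u x) → ∀ x ∈ Icc α τ, u x ≤ R) :
    ∃ u w, IsC1Solution α β (fun t => b t * f (u t)) u w ∧ (∀ x ∈ Icc α β, 0 < u x) ∧
      u β = u α ∧ w β = w α := by
  obtain ⟨r, ⟨e, he, hslope⟩, hr, hrR⟩ := ((eventually_exists_separating_slope hαβ hb hbneg hf).and
    (Ioo_mem_nhdsGT (by linarith : (0 : ℝ) < R + 1))).exists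
  obtain ⟨D₀, hD₀⟩ := exists_initial_bound_of_pos hb hf hτ hbound
  set D := max e D₀
  have heD : e ≤ D := le_max_left _ _
  have hpos {u w : ℝ → ℝ} (H : IsC1Solution α β (fun t => b t * f (u t)) u w)
      (huα : u α ∈ Icc r (R + 1)) (hle : u α ≤ u β) : ∀ x ∈ Icc α β, 0 < u x :=
    H.pos_of_right_endpoint hb hf (hr.trans_le huα.1) (Or.inl (hr.trans_le (huα.1.trans hle)))
  obtain ⟨u, w, H, hu, huβ, hwβ⟩ := exists_solution_of_shooting_rectangle hαβ.le hb hf.continuous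
    hf.abs_le hrR.le (by linarith : -D ≤ e) heD
    (fun u w H huα hside => by
      by_contra! hle
      obtain ⟨huR, hwD₀⟩ := hD₀ u w H (hpos H huα hle)
      obtain ⟨hwlo, hwhi⟩ := abs_lt.1 (hwD₀.trans_le (le_max_right e D₀))
      rcases hside with hside | hside | hside <;> linarith)
    (fun u w H huα => (hslope u w H huα).1)
    (fun u w H huα => (hslope u w H huα).2.1)
    (fun u w H huα => (hslope u w H huα).2.2)
  exact ⟨u, w, H, hpos H hu huβ.ge, huβ, hwβ⟩

end PositiveSolutions

section PeriodicExtension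

variable {T p : ℝ}

lemma exists_continuous_periodic_eqOn_Icc (hT : 0 < T) {φ : ℝ → ℝ} (hφ : Continuous φ)
    (hp : φ (p + T) = φ p) :
    ∃ v, Continuous v ∧ Function.Periodic v T ∧ EqOn v φ (Icc p (p + T)) := by
  have : Fact (0 < T) := ⟨hT⟩
  have hper : Function.Periodic (fun x : ℝ => AddCircle.liftIco T p φ x) T := fun x =>
    congrArg _ (AddCircle.coe_add_period T x)
  refine ⟨fun x => AddCircle.liftIco T p φ x,
    (AddCircle.liftIco_continuous hp.symm hφ.continuousOn).comp (AddCircle.continuous_mk' T),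
    hper, fun x hx => ?_⟩
  rcases hx.2.eq_or_lt with rfl | hxT
  · rw [hper p, hp]
    exact AddCircle.liftIco_coe_apply (left_mem_Ico.2 (lt_add_of_pos_right p hT))
  · exact AddCircle.liftIco_coe_apply ⟨hx.1, hxT⟩

lemma exists_periodic_eqOn_Ioc (hT : 0 < T) {a : ℝ → ℝ} (ha : IntervalIntegrable a volume 0 T) :
    ∃ b : ℝ → ℝ, Function.Periodic b T ∧ (∀ x y, IntervalIntegrable b volume x y) ∧
      EqOn b a (Ioc 0 T) := by
  have hper : Function.Periodic (fun x => a (toIocMod hT 0 x)) T :=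
    (toIocMod_periodic hT 0).comp a
  have heq : EqOn (fun x => a (toIocMod hT 0 x)) a (Ioc 0 T) := fun x hx =>
    congrArg a ((toIocMod_eq_self hT).2 (by rwa [zero_add]))
  refine ⟨_, hper, hper.intervalIntegrable₀ hT.ne' (ha.congr ?_), heq⟩
  rw [uIoc_of_le hT.le]
  exact heq.symm

lemma sub_eq_integral_of_periodic (hT : 0 < T) {v ψ : ℝ → ℝ}
    (hv : Function.Periodic v T) (hψ : Function.Periodic ψ T)
    (hint : ∀ x y, IntervalIntegrable ψ volume x y)
    (hsub : ∀ x ∈ Icc p (p + T), v x - v p = ∫ t in p..x, ψ t) (x y : ℝ) :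
    v y - v x = ∫ t in x..y, ψ t := by
  have hmean : ∫ t in p..p + T, ψ t = 0 := by
    rw [← hsub _ (right_mem_Icc.2 (by linarith)), hv, sub_self]
  have hper : Function.Periodic (fun x => v x - ∫ t in p..x, ψ t) T := fun x => by
    have hshift : ∫ t in x..x + T, ψ t = 0 := (hψ.intervalIntegral_add_eq x p).trans hmean
    simp only
    rw [hv, ← intervalIntegral.integral_add_adjacent_intervals (hint p x) (hint x _), hshift,
      add_zero]
  have hconst (x : ℝ) : v x - ∫ t in p..x, ψ t = v p := by
    obtain ⟨z, hz, hxz⟩ := hper.exists_mem_Ico hT x p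
    rw [hxz, ← hsub z (Ico_subset_Icc_self hz), sub_sub_cancel]
  rw [← intervalIntegral.integral_interval_sub_left (hint p y) (hint p x)]
  linarith [hconst x, hconst y]

theorem IsC1Solution.exists_periodic_extension (hT : 0 < T) {b f u w : ℝ → ℝ}
    (hb : ∀ x y, IntervalIntegrable b volume x y) (hbper : Function.Periodic b T)
    (hf : Continuous f) (H : IsC1Solution p (p + T) (fun t => b t * f (u t)) u w)
    (hu : u (p + T) = u p) (hw : w (p + T) = w p) :
    ∃ v ψ, (∀ x y, IsC1Solution x y (fun t => b t * f (v t)) v ψ) ∧ Function.Periodic v T ∧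
      Function.Periodic ψ T ∧ EqOn v u (Icc p (p + T)) := by
  obtain ⟨v, hv, hvper, hvu⟩ := exists_continuous_periodic_eqOn_Icc hT H.continuous hu
  obtain ⟨ψ, hψ, hψper, hψw⟩ := exists_continuous_periodic_eqOn_Icc hT H.continuous_deriv hw
  have hp : p ∈ Icc p (p + T) := left_mem_Icc.2 (by linarith)
  have hsubset {x : ℝ} (hx : x ∈ Icc p (p + T)) : uIcc p x ⊆ Icc p (p + T) :=
    uIcc_subset_Icc hp hx
  have hforce : Function.Periodic (fun t => -(b t * f (v t))) T := fun t => by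
    simp only [hbper t, hvper t]
  have hv_sub := sub_eq_integral_of_periodic hT hvper hψper (hψ.intervalIntegrable · ·)
    fun x hx => by
      rw [hvu hx, hvu hp, H.sub_eq p hp x hx]
      exact intervalIntegral.integral_congr fun t ht => (hψw (hsubset hx ht)).symm
  have hψ_sub := sub_eq_integral_of_periodic hT hψper hforce
    (fun x y => (intervalIntegrable_mul_of_continuous hb (hf.comp hv) x y).neg) fun x hx => by
      rw [hψw hx, hψw hp, H.deriv_sub_eq p hp x hx, ← intervalIntegral.integral_neg]
      refine intervalIntegral.integral_congr fun t ht => ?_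
      simp only [hvu (hsubset hx ht)]
  refine ⟨v, ψ, fun x y => ⟨hv, hψ, fun s _ t _ => hv_sub s t, fun s _ t _ => ?_⟩, hvper, hψper,
    hvu⟩
  rw [hψ_sub s t]
  exact intervalIntegral.integral_neg

end PeriodicExtension

section PeriodicWeight

variable {T : ℝ}

lemma IsSolOn.congr {h h' u u' : ℝ → ℝ} (H : IsSolOn T h u u') (hh : EqOn h h' (Ioc 0 T)) :
    IsSolOn T h' u u' := by
  refine ⟨H.1, H.2.1, fun x hx => ?_⟩
  rw [H.2.2 x hx, intervalIntegral.integral_of_le hx.1, intervalIntegral.integral_of_le hx.1]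
  exact congrArg (u' 0 - ·) (setIntegral_congr_fun measurableSet_Ioc
    (hh.mono (Ioc_subset_Ioc_right hx.2)))

lemma CondA1.congr {a b : ℝ → ℝ} (ha : CondA1 T a) (hab : EqOn a b (Ioc 0 T)) : CondA1 T b := by
  obtain ⟨m, σ, τ, hm, hστ, hdisj, hnonneg, hne, hneg⟩ := ha
  have hae {S : Set ℝ} (hS : S ⊆ Icc 0 T) : a =ᵐ[volume.restrict S] b := by
    refine ae_restrict_of_ae_restrict_of_subset hS ?_
    rw [← restrict_Ioc_eq_restrict_Icc]
    exact ae_restrict_of_forall_mem measurableSet_Ioc hab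
  have hsub (i : Fin m) : Icc (σ i) (τ i) ⊆ Icc 0 T := Icc_subset_Icc (hστ i).1 (hστ i).2.2
  refine ⟨m, σ, τ, hm, hστ, hdisj, fun i => ?_, fun i hzero => hne i ?_, ?_⟩
  · filter_upwards [hnonneg i, hae (hsub i)] with x hx hxb using hxb ▸ hx
  · filter_upwards [hzero, hae (hsub i)] with x hx hxb using hxb.trans hx
  · filter_upwards [hneg, hae sdiff_subset] with x hx hxb using hxb ▸ hx

end PeriodicWeight

section MultipleIntervals

variable {T K R : ℝ} {b f : ℝ → ℝ} {ι : Type*} {σ τ : ι → ℝ}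

lemma HasAPrioriBound.le_on_iUnion (hbound : ∀ i, HasAPrioriBound b f (σ i) (τ i) R)
    (hστ : ∀ i, Icc (σ i) (τ i) ⊆ Icc 0 T) {u w : ℝ → ℝ}
    (H : IsC1Solution 0 T (fun t => b t * f (u t)) u w) (hu : ∀ x ∈ Icc 0 T, 0 < u x) :
    ∀ x ∈ ⋃ i, Icc (σ i) (τ i), u x ≤ R := fun x hx => by
  obtain ⟨i, hi⟩ := mem_iUnion.1 hx
  exact hbound i u w (H.mono (hστ i)) (fun y hy => (hu y (hστ i hy)).le) x hi

theorem exists_bounded_neumann_solution (hT : 0 ≤ T)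
    (hb : ∀ x y, IntervalIntegrable b volume x y) (hbneg : ∫ t in (0 : ℝ)..T, b t < 0)
    (hf : IsTruncatedNonlinearity K f) (hστ : ∀ i, Icc (σ i) (τ i) ⊆ Icc 0 T)
    (hout : ∀ᵐ t ∂volume.restrict (Icc 0 T \ ⋃ i, Icc (σ i) (τ i)), b t ≤ 0) {i₀ : ι}
    (hi₀ : σ i₀ ≤ τ i₀) (hR : 0 ≤ R) (hbound : ∀ i, HasAPrioriBound b f (σ i) (τ i) R) :
    ∃ u w, IsSolOn T (fun t => b t * f (u t)) u w ∧ (∀ x ∈ Icc 0 T, 0 < u x ∧ u x ≤ R) ∧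
      w 0 = 0 ∧ w T = 0 := by
  have hσ := left_mem_Icc.2 hi₀
  obtain ⟨u, w, H, hu, hw⟩ := exists_positive_neumann_solution hT hb hbneg hf
    ⟨σ i₀, hστ i₀ hσ, mem_iUnion_of_mem i₀ hσ⟩ hout hR
    fun u w H hu => HasAPrioriBound.le_on_iUnion hbound hστ H hu
  exact ⟨u, w, H.isSolOn hT, hu, hw⟩

theorem exists_bounded_periodic_solution (hT : 0 < T)
    (hb : ∀ x y, IntervalIntegrable b volume x y) (hbper : Function.Periodic b T)
    (hbneg : ∫ t in (0 : ℝ)..T, b t < 0)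
    (hf : IsTruncatedNonlinearity K f) (hστ : ∀ i, Icc (σ i) (τ i) ⊆ Icc 0 T)
    (hout : ∀ᵐ t ∂volume.restrict (Icc 0 T \ ⋃ i, Icc (σ i) (τ i)), b t ≤ 0) {i₀ : ι}
    (hi₀ : σ i₀ < τ i₀) (hR : 0 ≤ R) (hbound : ∀ i, HasAPrioriBound b f (σ i) (τ i) R) :
    ∃ u w, IsSolOn T (fun t => b t * f (u t)) u w ∧ (∀ x ∈ Icc 0 T, 0 < u x ∧ u x ≤ R) ∧
      u 0 = u T ∧ w 0 = w T := by
  have hσ := hστ i₀ (left_mem_Icc.2 hi₀.le)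
  have hτ := hστ i₀ (right_mem_Icc.2 hi₀.le)
  have hτT : τ i₀ ≤ σ i₀ + T := by linarith [hσ.1, hτ.2]
  have hsub : Icc (σ i₀) (τ i₀) ⊆ Icc (σ i₀) (σ i₀ + T) := Icc_subset_Icc_right hτT
  have hmean : ∫ t in σ i₀..σ i₀ + T, b t < 0 := by
    rwa [hbper.intervalIntegral_add_eq _ 0, zero_add]
  obtain ⟨u, w, H, hu, huT, hwT⟩ := exists_positive_periodic_solution
    (lt_add_of_pos_right (σ i₀) hT) hb hmean hf ⟨hi₀, hτT⟩ hR fun u w H hu =>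
      hbound i₀ u w (H.mono hsub) fun x hx => (hu x (hsub hx)).le
  obtain ⟨v, ψ, Hv, hvper, hψper, hvu⟩ :=
    H.exists_periodic_extension hT hb hbper hf.continuous huT hwT
  have hpos (x : ℝ) : 0 < v x := by
    obtain ⟨y, hy, hxy⟩ := hvper.exists_mem_Ico hT x (σ i₀)
    have hy := Ico_subset_Icc_self hy
    exact hxy ▸ hvu hy ▸ hu y hy
  obtain ⟨z, hz, hψz, hmax⟩ := IsC1Solution.exists_isMaxOn_of_periodic hT Hv hvper
  have hle := (Hv 0 T).le_of_isMaxOn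
    (hout.mono fun t ht => mul_nonpos_of_nonpos_of_nonneg ht (hf.nonneg _))
    (HasAPrioriBound.le_on_iUnion hbound hστ (Hv 0 T) fun x _ => hpos x)
    ⟨σ i₀, hσ, mem_iUnion_of_mem i₀ (left_mem_Icc.2 hi₀.le)⟩ hz hψz hmax
  exact ⟨v, ψ, (Hv 0 T).isSolOn hT.le, fun x hx => ⟨hpos x, hle x hx⟩, hvper.eq.symm,
    hψper.eq.symm⟩

end MultipleIntervals

theorem statement_3_general
    (T : ℝ) (hT : 0 < T)
    (a : ℝ → ℝ) (ha : IntervalIntegrable a volume 0 T)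
    (ha1 : CondA1 T a)
    (ha2 : (∫ x in (0 : ℝ)..T, a x) < 0) :
    ∃ L, ∀ g, CondG1 g → RegOscAtZero g →
      Tendsto (fun s => g s / s) (nhdsWithin 0 (Ioi 0)) (nhds 0) →
      (∀ᶠ s in atTop, L * s ≤ g s) → PosSolNeumann T a g ∧ PosSolPeriodic T a g := by
  obtain ⟨b, hbper, hb, hba⟩ := exists_periodic_eqOn_Ioc hT ha
  obtain ⟨m, σ, τ, hm, hστ, -, hnonneg, hne, hout⟩ := ha1.congr hba.symm
  have hbneg : ∫ t in (0 : ℝ)..T, b t < 0 := by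
    rwa [intervalIntegral.integral_of_le hT.le, setIntegral_congr_fun measurableSet_Ioc hba,
      ← intervalIntegral.integral_of_le hT.le]
  have hsub (i : Fin m) : Icc (σ i) (τ i) ⊆ Icc 0 T := Icc_subset_Icc (hστ i).1 (hστ i).2.2
  obtain ⟨L, hL, hL0⟩ := ((eventually_all.2 fun i =>
    eventually_hasAPrioriBound hb (hnonneg i) (hne i)).and (eventually_gt_atTop 0)).exists
  refine ⟨L, fun g hg hreg hg0 hLg => ?_⟩
  obtain ⟨R₀, hgR₀, hR₀⟩ :=
    ((eventually_forall_ge_atTop.2 hLg).and (eventually_gt_atTop 0)).exists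
  have hR : 0 < L * R₀ := mul_pos hL0 hR₀
  obtain ⟨K, f, hf, hfg, hfL⟩ := exists_isTruncatedNonlinearity hg hreg hg0 hR hR₀.le hgR₀
  have hbound (i : Fin m) := hL i f R₀ hf.continuous hf.nonneg hR₀ hfL
  have hi₀ := lt_of_not_ae_restrict_Icc (hne ⟨0, hm⟩)
  have hsol {u w : ℝ → ℝ} (H : IsSolOn T (fun t => b t * f (u t)) u w)
      (hu : ∀ x ∈ Icc 0 T, 0 < u x ∧ u x ≤ L * R₀) : IsSolOn T (fun t => a t * g (u t)) u w :=
    H.congr fun t ht => by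
      have hut := hu t (Ioc_subset_Icc_self ht)
      simp only [hba ht, hfg ⟨hut.1.le, hut.2⟩]
  obtain ⟨u, w, hN, hu, hw⟩ :=
    exists_bounded_neumann_solution hT.le hb hbneg hf hsub hout hi₀.le hR.le hbound
  obtain ⟨v, ψ, hP, hv, hψ⟩ :=
    exists_bounded_periodic_solution hT hb hbper hbneg hf hsub hout hi₀ hR.le hbound
  exact ⟨⟨u, w, hsol hN hu, fun x hx => (hu x hx).1, hw⟩,
    ⟨v, ψ, hsol hP hv, fun x hx => (hv x hx).1, hψ⟩⟩

/-- Corollary: under (g1), regular oscillation at zero, `g(s)/s → 0` as `s → 0⁺`,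
`g(s)/s → +∞` as `s → +∞`, (a1) and (a2), the equation `u'' + a(x) g(u) = 0` has
a positive Neumann solution and a positive periodic solution. -/
theorem statement_3
    (T : ℝ) (hT : 0 < T)
    (g : ℝ → ℝ) (hg1 : CondG1 g) (hreg : RegOscAtZero g)
    (hg0 : Tendsto (fun s => g s / s) (nhdsWithin 0 (Ioi 0)) (nhds 0))
    (hginf : Tendsto (fun s => g s / s) atTop atTop)
    (a : ℝ → ℝ) (ha : IntervalIntegrable a volume 0 T)
    (ha1 : CondA1 T a)
    (ha2 : (∫ x in (0:ℝ)..T, a x) < 0) :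
    PosSolNeumann T a g ∧ PosSolPeriodic T a g := by
  obtain ⟨L, hL⟩ := statement_3_general T hT a ha ha1 ha2
  refine hL g hg1 hreg hg0 ?_
  filter_upwards [hginf.eventually_ge_atTop L, eventually_gt_atTop 0] with s hs hs0
    using (le_div_iff₀ hs0).1 hs
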